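/- (Vanishing of the Pohozaev term.) Under the blow-up setup, for every ε' ∈ (0, 1/4) the quantity J'_i := δ_i ∫_{B(x_i, δ_i ε')} ∂₁u_i(y) · V_i(y) e^{u_i(y)} dy tends to 0 as i → ∞. -/

import Mathlib

open MeasureTheory Filter Metric

abbrev E2 := EuclideanSpace ℝ (Fin 2)

noncomputable def pd (j : Fin 2) (u : E2 → ℝ) (x : E2) : ℝ :=
  fderiv ℝ u x (EuclideanSpace.single j 1)

noncomputable def lapl (u : E2 → ℝ) (x : E2) : ℝ :=
  pd 0 (pd 0 u) x + pd 1 (pd 1 u) x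

/-- unit vector -/
noncomputable def ee (θ : ℝ) : E2 :=
  Real.cos θ • EuclideanSpace.single 0 1 + Real.sin θ • EuclideanSpace.single 1 1

noncomputable def ee' (θ : ℝ) : E2 :=
  (-Real.sin θ) • EuclideanSpace.single 0 1 + Real.cos θ • EuclideanSpace.single 1 1

lemma hasDerivAt_ee (θ : ℝ) : HasDerivAt ee (ee' θ) θ := by
  unfold ee ee'
  exact ((Real.hasDerivAt_cos θ).smul_const _).add ((Real.hasDerivAt_sin θ).smul_const _)

lemma hasDerivAt_ee' (θ : ℝ) : HasDerivAt ee' (-ee θ) θ := by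
  have h := ((Real.hasDerivAt_sin θ).neg.smul_const (EuclideanSpace.single (0 : Fin 2) (1:ℝ))).add
    ((Real.hasDerivAt_cos θ).smul_const (EuclideanSpace.single (1 : Fin 2) (1:ℝ)))
  have e : -ee θ = (-Real.cos θ) • EuclideanSpace.single 0 1 + (-Real.sin θ) • EuclideanSpace.single 1 1 := by
    unfold ee; module
  rw [e]
  exact h

@[fun_prop]
lemma continuous_ee : Continuous ee := by unfold ee; fun_prop
@[fun_prop]
lemma continuous_ee' : Continuous ee' := by unfold ee'; fun_prop

lemma norm_ee (θ : ℝ) : ‖ee θ‖ = 1 := by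
  rw [EuclideanSpace.norm_eq]
  simp [ee]

lemma ee_per : ee Real.pi = ee (-Real.pi) := by simp [ee]
lemma ee'_per : ee' Real.pi = ee' (-Real.pi) := by simp [ee']

lemma deriv_param (F F' : ℝ → ℝ → ℝ) (a b t : ℝ) (hF : Continuous (Function.uncurry F))
    (hF' : Continuous (Function.uncurry F'))
    (h : ∀ t θ, HasDerivAt (fun t => F t θ) (F' t θ) t) :
    HasDerivAt (fun t => ∫ θ in a..b, F t θ) (∫ θ in a..b, F' t θ) t := by
  have hK : IsCompact (Set.Icc (t-1) (t+1) ×ˢ Set.uIcc a b) := isCompact_Icc.prod isCompact_uIcc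
  obtain ⟨C, hC⟩ := hK.exists_bound_of_continuousOn hF'.continuousOn
  have c1 : ∀ t, Continuous (F t) := fun t => hF.comp (by fun_prop : Continuous fun θ : ℝ => (t, θ))
  have c2 : ∀ t, Continuous (F' t) := fun t => hF'.comp (by fun_prop : Continuous fun θ : ℝ => (t, θ))
  refine (intervalIntegral.hasDerivAt_integral_of_dominated_loc_of_deriv_le (F := F) (F' := F')
    (bound := fun _ => C) (s := Set.Icc (t-1) (t+1)) (Icc_mem_nhds (by linarith) (by linarith))
    (Eventually.of_forall fun t => (c1 t).aestronglyMeasurable) ((c1 t).intervalIntegrable _ _)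
    (c2 t).aestronglyMeasurable ?_ (by simp) ?_).2
  · refine Eventually.of_forall fun θ hθ s hs => ?_
    exact hC (s, θ) ⟨hs, Set.uIoc_subset_uIcc hθ⟩
  · exact Eventually.of_forall fun θ hθ s hs => h s θ

lemma pd_pd (W : E2 → ℝ) (hW : ContDiff ℝ 2 W) (i j : Fin 2) (y : E2) :
    pd i (pd j W) y = fderiv ℝ (fderiv ℝ W) y (EuclideanSpace.single i 1) (EuclideanSpace.single j 1) := by
  have h1 : Differentiable ℝ (fderiv ℝ W) :=
    (hW.fderiv_right (m := 1) (by norm_num)).differentiable (by norm_num)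
  have h2 : HasFDerivAt (pd j W) ((ContinuousLinearMap.apply ℝ ℝ (EuclideanSpace.single j 1)).comp
      (fderiv ℝ (fderiv ℝ W) y)) y :=
    (ContinuousLinearMap.apply ℝ ℝ (EuclideanSpace.single j (1:ℝ))).hasFDerivAt.comp y (h1 y).hasFDerivAt
  show fderiv ℝ (pd j W) y _ = _
  rw [h2.fderiv]; rfl

lemma lapl_polar (W : E2 → ℝ) (hW : ContDiff ℝ 2 W) (y : E2) (θ : ℝ) :
    lapl W y = fderiv ℝ (fderiv ℝ W) y (ee θ) (ee θ) + fderiv ℝ (fderiv ℝ W) y (ee' θ) (ee' θ) := by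
  unfold lapl
  rw [pd_pd W hW, pd_pd W hW]
  simp only [ee, ee', map_add, map_smul, add_apply, smul_apply,
    smul_eq_mul]
  have := Real.cos_sq_add_sin_sq θ
  linear_combination (-(fderiv ℝ (fderiv ℝ W) y (EuclideanSpace.single 0 1) (EuclideanSpace.single 0 1))-(fderiv ℝ (fderiv ℝ W) y (EuclideanSpace.single 1 1) (EuclideanSpace.single 1 1))) * this

lemma continuous_lapl (W : E2 → ℝ) (hW : ContDiff ℝ 2 W) : Continuous (lapl W) := by
  have h1 : ContDiff ℝ 1 (fderiv ℝ W) := hW.fderiv_right (by norm_num)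
  have h2 : Continuous (fderiv ℝ (fderiv ℝ W)) := h1.continuous_fderiv (by norm_num)
  have : lapl W = fun y => fderiv ℝ (fderiv ℝ W) y (EuclideanSpace.single 0 1) (EuclideanSpace.single 0 1)
    + fderiv ℝ (fderiv ℝ W) y (EuclideanSpace.single 1 1) (EuclideanSpace.single 1 1) := by
    ext y; unfold lapl; rw [pd_pd W hW, pd_pd W hW]
  rw [this]
  fun_prop

lemma circle_mean_aux (W : E2 → ℝ) (hW : ContDiff ℝ 2 W) (x : E2) (ρ : ℝ) (hρ : 0 < ρ) :
    (∫ θ in (-Real.pi)..Real.pi, W (x + ρ • ee θ)) - 2 * Real.pi * W x =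
      ∫ t in (0:ℝ)..ρ, (Real.log (ρ / t) * (t * ∫ θ in (-Real.pi)..Real.pi, lapl W (x + t • ee θ))) := by
  have d1 : Differentiable ℝ W := hW.differentiable (by norm_num)
  have cd : ContDiff ℝ 1 (fderiv ℝ W) := hW.fderiv_right (by norm_num)
  have d2 : Differentiable ℝ (fderiv ℝ W) := cd.differentiable (by norm_num)
  have c1 : Continuous (fderiv ℝ W) := cd.continuous
  have c2 : Continuous (fderiv ℝ (fderiv ℝ W)) := cd.continuous_fderiv (by norm_num)
  have cL := continuous_lapl W hW
  have cW := hW.continuous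
  have line : ∀ t θ, HasDerivAt (fun t : ℝ => x + t • ee θ) (ee θ) t := fun t θ => by
    simpa using ((hasDerivAt_id t).smul_const (ee θ)).const_add x
  have circ : ∀ t θ : ℝ, HasDerivAt (fun θ : ℝ => x + t • ee θ) (t • ee' θ) θ := fun t θ =>
    ((hasDerivAt_ee θ).fun_const_smul t).const_add x
  set D : ℝ → ℝ := fun t => ∫ θ in (-Real.pi)..Real.pi, fderiv ℝ W (x + t • ee θ) (ee θ) with hD
  set φ : ℝ → ℝ := fun t => ∫ θ in (-Real.pi)..Real.pi, W (x + t • ee θ) with hφ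
  set Lp : ℝ → ℝ := fun t => ∫ θ in (-Real.pi)..Real.pi, lapl W (x + t • ee θ) with hLp
  have h1 : ∀ t, HasDerivAt φ (D t) t := fun t => by
    refine deriv_param (fun t θ => W (x + t • ee θ)) (fun t θ => fderiv ℝ W (x + t • ee θ) (ee θ)) _ _ t
      (by unfold Function.uncurry; fun_prop) (by unfold Function.uncurry; fun_prop) ?_
    intro t θ
    exact (d1 _).hasFDerivAt.comp_hasDerivAt t (line t θ)
  have h2 : ∀ t, HasDerivAt (fun t => t * D t) (t * Lp t) t := fun t => by
    have e1 : (fun t => t * D t) = fun t => ∫ θ in (-Real.pi)..Real.pi, t * fderiv ℝ W (x + t • ee θ) (ee θ) := by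
      ext t; rw [intervalIntegral.integral_const_mul]
    have k := deriv_param (fun t θ => t * fderiv ℝ W (x + t • ee θ) (ee θ))
      (fun t θ => 1 * fderiv ℝ W (x + t • ee θ) (ee θ) + t * fderiv ℝ (fderiv ℝ W) (x + t • ee θ) (ee θ) (ee θ))
      (-Real.pi) Real.pi t
      (by unfold Function.uncurry; fun_prop) (by unfold Function.uncurry; fun_prop) (by
        intro t θ
        refine (hasDerivAt_id t).mul ?_
        have := (d2 (x + t • ee θ)).hasFDerivAt.comp_hasDerivAt t (line t θ)
        exact this.clm_apply (hasDerivAt_const t (ee θ)) |>.congr_deriv (by simp))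
    rw [e1]
    refine k.congr_deriv ?_
    have e2 : ∀ θ, 1 * fderiv ℝ W (x + t • ee θ) (ee θ) + t * fderiv ℝ (fderiv ℝ W) (x + t • ee θ) (ee θ) (ee θ)
       = t * lapl W (x + t • ee θ) - (fderiv ℝ (fderiv ℝ W) (x + t • ee θ) (t • ee' θ) (ee' θ) +
          fderiv ℝ W (x + t • ee θ) (-ee θ)) := fun θ => by
      rw [lapl_polar W hW _ θ]; simp only [map_smul, map_neg, smul_apply, smul_eq_mul]; ring
    simp_rw [e2]
    rw [intervalIntegral.integral_sub, intervalIntegral.integral_const_mul]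
    · have : ∫ θ in (-Real.pi)..Real.pi, (fderiv ℝ (fderiv ℝ W) (x + t • ee θ) (t • ee' θ) (ee' θ) +
          fderiv ℝ W (x + t • ee θ) (-ee θ)) = 
          (fderiv ℝ W (x + t • ee Real.pi) (ee' Real.pi)) - fderiv ℝ W (x + t • ee (-Real.pi)) (ee' (-Real.pi)) := by
        refine intervalIntegral.integral_eq_sub_of_hasDerivAt (f := fun θ => fderiv ℝ W (x + t • ee θ) (ee' θ)) ?_ ?_
        · intro θ _
          have := (d2 (x + t • ee θ)).hasFDerivAt.comp_hasDerivAt θ (circ t θ)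
          exact this.clm_apply (hasDerivAt_ee' θ)
        · apply Continuous.intervalIntegrable; fun_prop
      rw [this, ee_per, ee'_per]; simp [hLp]
    · apply Continuous.intervalIntegrable; fun_prop
    · apply Continuous.intervalIntegrable; fun_prop
  have cD : Continuous D := intervalIntegral.continuous_parametric_intervalIntegral_of_continuous' (by unfold Function.uncurry; fun_prop) _ _
  have cφ : Continuous φ := intervalIntegral.continuous_parametric_intervalIntegral_of_continuous' (by unfold Function.uncurry; fun_prop) _ _
  have cLp : Continuous Lp := intervalIntegral.continuous_parametric_intervalIntegral_of_continuous' (by unfold Function.uncurry; fun_prop) _ _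
  have elog : ∀ t ∈ Set.Icc 0 ρ, Real.log (ρ / t) * t = Real.log ρ * t - t * Real.log t := by
    intro t ht
    rcases ht.1.eq_or_lt with h | h
    · subst h; simp
    · rw [Real.log_div hρ.ne' h.ne']; ring
  have key : ∫ t in (0:ℝ)..ρ, (Real.log ρ * t - t * Real.log t) * Lp t =
    ((Real.log ρ * ρ - ρ * Real.log ρ) * D ρ + φ ρ) - ((Real.log ρ * 0 - 0 * Real.log 0) * D 0 + φ 0) := by
    refine intervalIntegral.integral_eq_sub_of_hasDerivAt_of_le (f := fun t => (Real.log ρ * t - t * Real.log t) * D t + φ t) hρ.le ?_ ?_ ?_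
    · have := Real.continuous_mul_log
      exact Continuous.continuousOn (by fun_prop)
    · intro t ht
      have h0 : t ≠ 0 := ht.1.ne'
      have a1 : HasDerivAt (fun t => (Real.log ρ - Real.log t) * (t * D t)) ((-(t⁻¹)) * (t * D t) + (Real.log ρ - Real.log t) * (t * Lp t)) t := 
        ((Real.hasDerivAt_log h0).const_sub _).mul (h2 t)
      have a2 := a1.add (h1 t)
      have e3 : (fun t => (Real.log ρ * t - t * Real.log t) * D t + φ t) = (fun t => (Real.log ρ - Real.log t) * (t * D t)) + φ := by
        ext t; simp only [Pi.add_apply]; ring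
      rw [e3]
      refine a2.congr_deriv ?_
      field_simp; ring
    · have := Real.continuous_mul_log
      exact Continuous.intervalIntegrable (by fun_prop) _ _
  have e4 : φ 0 = 2 * Real.pi * W x := by
    simp only [hφ, zero_smul, add_zero, intervalIntegral.integral_const, smul_eq_mul]; ring
  rw [← e4]
  have e5 : ∫ t in (0:ℝ)..ρ, (Real.log (ρ / t) * (t * Lp t)) = ∫ t in (0:ℝ)..ρ, (Real.log ρ * t - t * Real.log t) * Lp t := by
    refine intervalIntegral.integral_congr fun t ht => ?_
    rw [Set.uIcc_of_le hρ.le] at ht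
    rw [← elog t ht]; ring
  rw [e5, key]; simp; ring

noncomputable def toE2 : ℝ × ℝ ≃ᵐ E2 :=
  (MeasurableEquiv.finTwoArrow (α := ℝ)).symm.trans (MeasurableEquiv.toLp 2 (Fin 2 → ℝ))

lemma toE2_mp : MeasurePreserving toE2 volume volume :=
  (volume_preserving_finTwoArrow ℝ).symm.trans (PiLp.volume_preserving_toLp (Fin 2))

lemma toE2_apply (p : ℝ × ℝ) : toE2 p = p.1 • EuclideanSpace.single 0 1 + p.2 • EuclideanSpace.single 1 1 := by
  ext i
  fin_cases i <;> simp [toE2, MeasurableEquiv.finTwoArrow]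

lemma toE2_polar (p : ℝ × ℝ) : toE2 (polarCoord.symm p) = p.1 • ee p.2 := by
  rw [toE2_apply, polarCoord_symm_apply, ee]; simp only; module

lemma polar_int (g : E2 → ℝ) : ∫ y, g y = ∫ p in polarCoord.target, p.1 * g (p.1 • ee p.2) := by
  rw [← toE2_mp.integral_comp toE2.measurableEmbedding, ← integral_comp_polarCoord_symm]
  simp_rw [toE2_polar, smul_eq_mul]

lemma polar_lint (g : E2 → ENNReal) : ∫⁻ y, g y = ∫⁻ p in polarCoord.target, ENNReal.ofReal p.1 * g (p.1 • ee p.2) := by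
  rw [← toE2_mp.lintegral_comp_emb toE2.measurableEmbedding, ← lintegral_comp_polarCoord_symm]
  simp_rw [toE2_polar, smul_eq_mul]

lemma radial_lint (G : ℝ → ENNReal) (hG : Measurable G) :
    ∫⁻ y : E2, G ‖y‖ = ENNReal.ofReal (2 * Real.pi) * ∫⁻ t in Set.Ioi (0:ℝ), ENNReal.ofReal t * G t := by
  rw [polar_lint]
  have : polarCoord.target = Set.Ioi (0:ℝ) ×ˢ Set.Ioo (-Real.pi) Real.pi := rfl
  rw [this, Measure.volume_eq_prod, ← Measure.prod_restrict]
  have e : ∀ᵐ p ∂((volume.restrict (Set.Ioi (0:ℝ))).prod (volume.restrict (Set.Ioo (-Real.pi) Real.pi))), 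
      ENNReal.ofReal p.1 * G ‖p.1 • ee p.2‖ = ENNReal.ofReal p.1 * G p.1 := by
    rw [Measure.prod_restrict]
    filter_upwards [ae_restrict_mem (measurableSet_Ioi.prod measurableSet_Ioo)] with p hp
    rw [norm_smul, norm_ee, mul_one, Real.norm_of_nonneg (le_of_lt hp.1)]
  rw [lintegral_congr_ae e, lintegral_prod _ (by fun_prop)]
  simp only [lintegral_const, Measure.restrict_apply_univ, Real.volume_Ioo]
  rw [lintegral_mul_const _ (by fun_prop), mul_comm]
  congr 2; ring

lemma polar_ball (g : E2 → ℝ) (hg : Measurable g) (x : E2) (ρ : ℝ) (hρ : 0 < ρ)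
    (hi : IntegrableOn g (ball x ρ)) :
    IntervalIntegrable (fun t => t * ∫ θ in (-Real.pi)..Real.pi, g (x + t • ee θ)) volume 0 ρ ∧
    ∫ y in ball x ρ, g y = ∫ t in (0:ℝ)..ρ, t * ∫ θ in (-Real.pi)..Real.pi, g (x + t • ee θ) := by
  set h : E2 → ℝ := fun y => (ball x ρ).indicator g (x + y) with hh
  have hi' : Integrable h := by
    have := (integrable_indicator_iff measurableSet_ball).2 hi
    exact this.comp_add_left x
  have hm : Measurable h := (hg.indicator measurableSet_ball).comp (by fun_prop)
  have e0 : ∫ y in ball x ρ, g y = ∫ y, h y := by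
    rw [← integral_indicator measurableSet_ball, hh, integral_add_left_eq_self]
  have tgt : polarCoord.target = Set.Ioi (0:ℝ) ×ˢ Set.Ioo (-Real.pi) Real.pi := rfl
  set μ := (volume.restrict (Set.Ioi (0:ℝ))).prod (volume.restrict (Set.Ioo (-Real.pi) Real.pi)) with hμ
  have hmu : volume.restrict (polarCoord.target) = μ := by
    rw [tgt, Measure.volume_eq_prod, ← Measure.prod_restrict]
  have hI : Integrable (fun p : ℝ × ℝ => p.1 * h (p.1 • ee p.2)) μ := by
    refine ⟨(by fun_prop : Measurable _).aestronglyMeasurable, ?_⟩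
    have := hi'.2
    unfold HasFiniteIntegral at this ⊢
    rw [polar_lint, hmu] at this
    refine lt_of_le_of_lt (lintegral_mono_ae ?_) this
    rw [← hmu, tgt]
    filter_upwards [ae_restrict_mem (measurableSet_Ioi.prod measurableSet_Ioo)] with p hp
    rw [enorm_mul, Real.enorm_of_nonneg (le_of_lt hp.1)]
  have hx : ∀ t ∈ Set.Ioi (0:ℝ), ∀ θ, h (t • ee θ) = if t < ρ then g (x + t • ee θ) else 0 := by
    intro t ht θ
    have ht' : 0 < t := ht
    simp only [hh, Set.indicator, mem_ball, dist_self_add_left, norm_smul, norm_ee, mul_one, Real.norm_of_nonneg ht'.le]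
  have hF : ∀ t ∈ Set.Ioi (0:ℝ), (∫ θ in Set.Ioo (-Real.pi) Real.pi, t * h (t • ee θ)) = 
      (Set.Ioo 0 ρ).indicator (fun t => t * ∫ θ in (-Real.pi)..Real.pi, g (x + t • ee θ)) t := by
    intro t ht
    simp_rw [hx t ht]
    rw [integral_const_mul]
    simp_rw [intervalIntegral.integral_of_le (show -Real.pi ≤ Real.pi by linarith [Real.pi_pos]), integral_Ioc_eq_integral_Ioo]
    by_cases h1 : t < ρ
    · simp [h1, Set.indicator, Set.mem_Ioi.1 ht]
    · simp [h1, Set.indicator]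
  have hI2 := hI.integral_prod_left
  have hI3 : IntegrableOn ((Set.Ioo 0 ρ).indicator (fun t => t * ∫ θ in (-Real.pi)..Real.pi, g (x + t • ee θ))) (Set.Ioi 0) :=
    IntegrableOn.congr_fun hI2 (fun t ht => hF t ht) measurableSet_Ioi
  constructor
  · rw [intervalIntegrable_iff_integrableOn_Ioo_of_le hρ.le]
    have := (hI3.mono_set (s := Set.Ioo 0 ρ) (fun t ht => ht.1))
    exact this.congr_fun (fun t ht => by simp [Set.indicator, ht.1, ht.2]) measurableSet_Ioo
  · rw [e0, polar_int, hmu, hμ, integral_prod _ hI, setIntegral_congr_fun measurableSet_Ioi hF,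
      setIntegral_indicator measurableSet_Ioo, intervalIntegral.integral_of_le hρ.le, integral_Ioc_eq_integral_Ioo]
    congr 2
    ext t; simp

/-- radial power integrals near 0 -/
lemma pow_near (p ρ : ℝ) (hp : p < 2) (hρ : 0 < ρ) :
    ∫⁻ z : E2 in ball 0 ρ, ENNReal.ofReal (‖z‖ ^ (-p)) = ENNReal.ofReal (2 * Real.pi * (ρ ^ (2 - p) / (2 - p))) := by
  rw [← lintegral_indicator measurableSet_ball]
  have : ∀ z : E2, (ball (0:E2) ρ).indicator (fun z : E2 => ENNReal.ofReal (‖z‖ ^ (-p))) z =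
     (fun t : ℝ => (Set.Iio ρ).indicator (fun t => ENNReal.ofReal (t ^ (-p))) t) ‖z‖ := by
    intro z; simp [Set.indicator]
  simp_rw [this]
  rw [radial_lint _ (by refine Measurable.indicator (by fun_prop) measurableSet_Iio)]
  have e2 : ∫⁻ t in Set.Ioi (0:ℝ), ENNReal.ofReal t * (Set.Iio ρ).indicator (fun t => ENNReal.ofReal (t ^ (-p))) t
    = ∫⁻ t in Set.Ioo (0:ℝ) ρ, ENNReal.ofReal (t ^ (1 - p)) := by
    have : Set.Ioo (0:ℝ) ρ = Set.Iio ρ ∩ Set.Ioi 0 := by ext; simp [and_comm]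
    rw [this, ← Measure.restrict_restrict measurableSet_Iio, ← lintegral_indicator measurableSet_Iio]
    refine setLIntegral_congr_fun measurableSet_Ioi fun t ht => ?_
    have ht : 0 < t := ht
    simp only [Set.indicator]
    split_ifs
    · rw [← ENNReal.ofReal_mul ht.le, sub_eq_add_neg, Real.rpow_add ht, Real.rpow_one]
    · simp
  rw [e2, ← ofReal_integral_eq_lintegral_ofReal, ← ENNReal.ofReal_mul (by positivity), ← integral_Ioc_eq_integral_Ioo,
    ← intervalIntegral.integral_of_le hρ.le, integral_rpow (Or.inl (by linarith))]
  · rw [Real.zero_rpow (by linarith)]; rw [show 1 - p + 1 = 2 - p by ring, sub_zero]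
  · have := intervalIntegral.intervalIntegrable_rpow' (a := 0) (b := ρ) (r := 1 - p) (by linarith)
    rw [intervalIntegrable_iff_integrableOn_Ioo_of_le hρ.le] at this
    exact this
  · filter_upwards [ae_restrict_mem measurableSet_Ioo] with t ht
    exact Real.rpow_nonneg ht.1.le _

lemma pow_far (a ρ : ℝ) (ha : 2 < a) (hρ : 0 < ρ) :
    ∫⁻ z : E2 in (ball 0 ρ)ᶜ, ENNReal.ofReal (‖z‖ ^ (-a)) = ENNReal.ofReal (2 * Real.pi * (ρ ^ (2 - a) / (a - 2))) := by
  rw [← lintegral_indicator measurableSet_ball.compl]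
  have : ∀ z : E2, ((ball (0:E2) ρ)ᶜ).indicator (fun z : E2 => ENNReal.ofReal (‖z‖ ^ (-a))) z =
     (fun t : ℝ => (Set.Ici ρ).indicator (fun t => ENNReal.ofReal (t ^ (-a))) t) ‖z‖ := by
    intro z; simp [Set.indicator]
  simp_rw [this]
  rw [radial_lint _ (by refine Measurable.indicator (by fun_prop) measurableSet_Ici)]
  have e2 : ∫⁻ t in Set.Ioi (0:ℝ), ENNReal.ofReal t * (Set.Ici ρ).indicator (fun t => ENNReal.ofReal (t ^ (-a))) t
    = ∫⁻ t in Set.Ici ρ, ENNReal.ofReal (t ^ (1 - a)) := by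
    have : Set.Ici ρ = Set.Ici ρ ∩ Set.Ioi 0 := by ext t; simp; intro h; linarith
    conv_rhs => rw [this]
    rw [← Measure.restrict_restrict measurableSet_Ici, ← lintegral_indicator measurableSet_Ici]
    refine setLIntegral_congr_fun measurableSet_Ioi fun t ht => ?_
    have ht : 0 < t := ht
    simp only [Set.indicator]
    split_ifs
    · rw [← ENNReal.ofReal_mul ht.le, sub_eq_add_neg, Real.rpow_add ht, Real.rpow_one]
    · simp
  rw [e2, ← restrict_Ioi_eq_restrict_Ici, ← ofReal_integral_eq_lintegral_ofReal, ← ENNReal.ofReal_mul (by positivity), 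
    integral_Ioi_rpow_of_lt (by linarith) hρ]
  · congr 2
    rw [show 1 - a + 1 = 2 - a by ring, show a - 2 = -(2 - a) by ring, div_neg, neg_div]
  · exact integrableOn_Ioi_rpow_of_lt (by linarith) hρ
  · filter_upwards [ae_restrict_mem measurableSet_Ioi] with t ht
    exact Real.rpow_nonneg (hρ.le.trans (le_of_lt ht)) _

lemma norm_rpow_int (p : ℝ) (hp : p < 2) (c x : E2) (R : ℝ) :
    IntegrableOn (fun y => ‖x - y‖ ^ (-p)) (ball c R) := by
  have h0 : ∀ ρ : ℝ, 0 < ρ → IntegrableOn (fun z : E2 => ‖z‖ ^ (-p)) (ball 0 ρ) := by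
    intro ρ hρ
    refine ⟨(by fun_prop : Measurable _).aestronglyMeasurable, ?_⟩
    unfold HasFiniteIntegral
    have : ∀ z : E2, ‖‖z‖ ^ (-p)‖ₑ = ENNReal.ofReal (‖z‖ ^ (-p)) := fun z =>
      Real.enorm_of_nonneg (by positivity)
    simp_rw [this]
    rw [pow_near p ρ hp hρ]; exact ENNReal.ofReal_lt_top
  have h1 : Integrable ((ball (0:E2) (‖x - c‖ + |R| + 1)).indicator (fun z : E2 => ‖z‖ ^ (-p))) :=
    (integrable_indicator_iff measurableSet_ball).2 (h0 _ (by positivity))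
  have h2 := h1.comp_sub_left x
  refine (h2.integrableOn (s := ball c R)).congr_fun (fun y hy => ?_) measurableSet_ball
  have : x - y ∈ ball (0:E2) (‖x - c‖ + |R| + 1) := by
    rw [mem_ball_zero_iff]
    rw [mem_ball, dist_eq_norm] at hy
    have : x - y = (x - c) - (y - c) := by abel
    rw [this]
    have := norm_sub_le (x - c) (y - c)
    have := le_abs_self R
    linarith
  simp only [Set.indicator, this, if_true]

lemma abs_log_div_le (k z : ℝ) (hk : 0 < k) (hz : 0 ≤ z) : |Real.log (k / z)| ≤ k * z ^ (-(1:ℝ)) + z / k := by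
  rw [Real.rpow_neg_one]
  rcases hz.eq_or_lt with h | h
  · subst h; simp
  · have h1 := Real.log_le_self (x := k / z) (by positivity)
    have h2 := Real.log_le_self (x := z / k) (by positivity)
    have h3 : Real.log (z / k) = - Real.log (k / z) := by rw [← Real.log_inv, inv_div]
    have h4 : 0 < z / k := by positivity
    have h5 : 0 < k / z := by positivity
    rw [abs_le]; rw [← div_eq_mul_inv]
    constructor <;> linarith

lemma log_dom_int (k : ℝ) (c x : E2) (R B : ℝ) :
    IntegrableOn (fun y => B * (k * ‖x - y‖ ^ (-(1:ℝ)) + ‖x - y‖ / k)) (ball c R) := by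
  refine Integrable.const_mul (Integrable.add ((norm_rpow_int 1 (by norm_num) c x R).const_mul k) ?_) B
  have : ContinuousOn (fun y => ‖x - y‖ / k) (closedBall c R) := by fun_prop
  exact (this.integrableOn_compact (isCompact_closedBall c R)).mono_set ball_subset_closedBall

lemma log_int (k : ℝ) (hk : 0 < k) (c x : E2) (R B : ℝ) (g : E2 → ℝ) (hg : Measurable g)
    (hB : ∀ y ∈ ball c R, |g y| ≤ B) :
    IntegrableOn (fun y => Real.log (k / ‖x - y‖) * g y) (ball c R) := by
  refine Integrable.mono' (log_dom_int k c x R B) (by fun_prop : Measurable _).aestronglyMeasurable ?_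
  filter_upwards [ae_restrict_mem measurableSet_ball] with y hy
  rw [norm_mul, mul_comm]
  exact mul_le_mul (hB y hy) (abs_log_div_le k _ hk (norm_nonneg _)) (by positivity) ((abs_nonneg _).trans (hB y hy))

lemma circle_mean (W : E2 → ℝ) (hW : ContDiff ℝ 2 W) (x : E2) (ρ : ℝ) (hρ : 0 < ρ) :
    (∫ θ in (-Real.pi)..Real.pi, W (x + ρ • ee θ)) = 2 * Real.pi * W x +
      ∫ y in ball x ρ, Real.log (ρ / ‖x - y‖) * lapl W y := by
  have cL := continuous_lapl W hW
  obtain ⟨B, hB⟩ := (isCompact_closedBall x ρ).exists_bound_of_continuousOn cL.continuousOn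
  have hi := log_int ρ hρ x x ρ B (lapl W) cL.measurable (fun y hy => hB y (ball_subset_closedBall hy))
  rw [(polar_ball _ (by have := cL.measurable; fun_prop) x ρ hρ hi).2]
  have := circle_mean_aux W hW x ρ hρ
  rw [← sub_eq_iff_eq_add', this]
  refine intervalIntegral.integral_congr fun t ht => ?_
  rw [Set.uIcc_of_le hρ.le] at ht
  have : ∀ θ, ‖x - (x + t • ee θ)‖ = t := fun θ => by
    rw [sub_add_cancel_left, norm_neg, norm_smul, norm_ee, mul_one, Real.norm_of_nonneg ht.1]
  simp_rw [this]
  rw [intervalIntegral.integral_const_mul]; ring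

noncomputable def iota : ℂ ≃ₗᵢ[ℝ] E2 := Complex.orthonormalBasisOneI.repr

lemma iota_exp (θ : ℝ) : iota (Complex.exp (θ * Complex.I)) = ee θ := by
  ext i
  fin_cases i
  · simp [iota, ee, Complex.exp_ofReal_mul_I_re]
  · simp [iota, ee, Complex.exp_ofReal_mul_I_im]

lemma log_avg (x y : E2) (ρ : ℝ) (hρ : 0 < ρ) :
    ∫ θ in (-Real.pi)..Real.pi, Real.log ‖x + ρ • ee θ - y‖ = 2 * Real.pi * Real.log (max ρ ‖x - y‖) := by
  have h := circleAverage_log_norm_sub_const_eq_log_radius_add_posLog (a := iota.symm y) (c := iota.symm x) hρ.ne'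
  have e1 : ∀ θ : ℝ, ‖circleMap (iota.symm x) ρ θ - iota.symm y‖ = ‖x + ρ • ee θ - y‖ := by
    intro θ
    rw [← iota.norm_map]
    congr 1
    have : (circleMap (iota.symm x) ρ θ) = iota.symm x + ρ • Complex.exp (θ * Complex.I) := by
      simp [circleMap]
    rw [this]
    rw [map_sub, map_add, map_smul, iota_exp, LinearIsometryEquiv.apply_symm_apply, LinearIsometryEquiv.apply_symm_apply]
  rw [Real.circleAverage] at h
  simp_rw [e1] at h
  have e2 : ‖iota.symm x - iota.symm y‖ = ‖x - y‖ := by rw [← map_sub, iota.symm.norm_map]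
  rw [e2, smul_eq_mul] at h
  have hper : Function.Periodic (fun θ => Real.log ‖x + ρ • ee θ - y‖) (2 * Real.pi) := by
    intro θ; simp [ee]
  have e3 := hper.intervalIntegral_add_eq (-Real.pi) 0
  rw [show -Real.pi + 2 * Real.pi = Real.pi by ring, zero_add] at e3
  rw [e3]
  have e4 : Real.log (max ρ ‖x - y‖) = Real.log ρ + Real.posLog (ρ⁻¹ * ‖x - y‖) := by
    rw [Real.posLog]
    rcases le_total ρ ‖x - y‖ with h1 | h1
    · rw [max_eq_right h1, max_eq_right, Real.log_mul (by positivity) (by linarith), Real.log_inv]; ring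
      apply Real.log_nonneg
      rw [inv_mul_eq_div, le_div_iff₀ hρ]; linarith
    · rw [max_eq_left h1, max_eq_left, add_zero]
      apply Real.log_nonpos (by positivity)
      rw [inv_mul_eq_div, div_le_iff₀ hρ]; linarith
  rw [e4, ← h]
  field_simp

lemma log_avg_int (x y : E2) (ρ : ℝ) :
    IntervalIntegrable (fun θ => Real.log ‖x + ρ • ee θ - y‖) volume (-Real.pi) Real.pi := by
  have h : CircleIntegrable (Real.log ‖· - iota.symm y‖) (iota.symm x) ρ := circleIntegrable_log_norm_sub_const ρ
  have e1 : ∀ θ : ℝ, ‖circleMap (iota.symm x) ρ θ - iota.symm y‖ = ‖x + ρ • ee θ - y‖ := by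
    intro θ
    rw [← iota.norm_map]
    congr 1
    have : (circleMap (iota.symm x) ρ θ) = iota.symm x + ρ • Complex.exp (θ * Complex.I) := by
      simp [circleMap]
    rw [this]
    rw [map_sub, map_add, map_smul, iota_exp, LinearIsometryEquiv.apply_symm_apply, LinearIsometryEquiv.apply_symm_apply]
  unfold CircleIntegrable at h
  simp_rw [e1] at h
  have hper : Function.Periodic (fun θ => Real.log ‖x + ρ • ee θ - y‖) (2 * Real.pi) := by
    intro θ; simp [ee]
  exact hper.intervalIntegrable₀ (by positivity) h _ _

/-- maximum principle -/
lemma max_principle (w : E2 → ℝ) (c : E2) (R C : ℝ) (hw : ContinuousOn w (closedBall c R))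
    (hmean : ∀ x ∈ ball c R, ∃ ρ > 0, closedBall x ρ ⊆ ball c R ∧
      2 * Real.pi * w x ≤ ∫ θ in (-Real.pi)..Real.pi, w (x + ρ • ee θ))
    (hb : ∀ x ∈ sphere c R, w x ≤ C) : ∀ x ∈ closedBall c R, w x ≤ C := by
  intro x0 hx0
  have key : ∀ ε > 0, w x0 ≤ C + ε * R ^ 2 := by
    intro ε hε
    set q : E2 → ℝ := fun x => w x + ε * ‖x - c‖ ^ 2 with hq
    have cq : ContinuousOn q (closedBall c R) := by fun_prop
    obtain ⟨z, hz, hzm⟩ := (isCompact_closedBall c R).exists_isMaxOn ⟨x0, hx0⟩ cq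
    have hx1 : q x0 ≤ q z := hzm hx0
    have hx2 : w x0 ≤ q x0 := by simp only [hq]; nlinarith [sq_nonneg ‖x0 - c‖]
    by_cases hzb : z ∈ ball c R
    · exfalso
      obtain ⟨ρ, hρ, hsub, hm⟩ := hmean z hzb
      have hin : ∀ θ, z + ρ • ee θ ∈ closedBall z ρ := fun θ => by
        simp [norm_smul, norm_ee, abs_of_pos hρ]
      have ci : Continuous (fun θ => w (z + ρ • ee θ)) :=
        hw.comp_continuous (by fun_prop) (fun θ => ball_subset_closedBall (hsub (hin θ)))
      have hle : ∀ θ, w (z + ρ • ee θ) ≤ w z - ε * (2 * ρ * inner ℝ (z - c) (ee θ) + ρ ^ 2) := by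
        intro θ
        have h1 : q (z + ρ • ee θ) ≤ q z := hzm (ball_subset_closedBall (hsub (hin θ)))
        simp only [hq] at h1
        have h2 : ‖z + ρ • ee θ - c‖ ^ 2 = ‖z - c‖ ^ 2 + 2 * ρ * inner ℝ (z - c) (ee θ) + ρ ^ 2 := by
          rw [show z + ρ • ee θ - c = (z - c) + ρ • ee θ by abel, norm_add_sq_real, inner_smul_right, norm_smul,
            norm_ee, Real.norm_of_nonneg hρ.le]; ring
        rw [h2] at h1; linarith
      have hint := intervalIntegral.integral_mono_on (μ := volume) (a := -Real.pi) (b := Real.pi) (by linarith [Real.pi_pos])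
        (ci.intervalIntegrable _ _) (Continuous.intervalIntegrable (by fun_prop) _ _) (fun θ _ => hle θ)
      have e0 : ∫ θ in (-Real.pi)..Real.pi, (inner ℝ (z - c) (ee θ)) = 0 := by
        have : ∀ θ, inner ℝ (z - c) (ee θ) = Real.cos θ * inner ℝ (z - c) (EuclideanSpace.single 0 1) + 
           Real.sin θ * inner ℝ (z - c) (EuclideanSpace.single 1 1) := fun θ => by
          rw [ee, inner_add_right, inner_smul_right, inner_smul_right]
        simp_rw [this]
        rw [intervalIntegral.integral_add (Continuous.intervalIntegrable (by fun_prop) _ _) (Continuous.intervalIntegrable (by fun_prop) _ _), 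
          intervalIntegral.integral_mul_const, intervalIntegral.integral_mul_const]
        simp
      have e1 : ∫ θ in (-Real.pi)..Real.pi, (w z - ε * (2 * ρ * inner ℝ (z - c) (ee θ) + ρ ^ 2)) = 2 * Real.pi * (w z - ε * ρ ^ 2) := by
        have : ∀ θ, w z - ε * (2 * ρ * inner ℝ (z - c) (ee θ) + ρ ^ 2) = (w z - ε * ρ ^ 2) - (ε * 2 * ρ) * inner ℝ (z - c) (ee θ) := fun θ => by ring
        simp_rw [this]
        rw [intervalIntegral.integral_sub (Continuous.intervalIntegrable (by fun_prop) _ _) (Continuous.intervalIntegrable (by fun_prop) _ _), 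
          intervalIntegral.integral_const_mul, e0, intervalIntegral.integral_const, smul_eq_mul]
        ring
      rw [e1] at hint
      have := hm.trans hint
      have h3 : 0 < ε * ρ ^ 2 := by positivity
      nlinarith [Real.pi_pos]
    · have hzs : ‖z - c‖ = R := by
        rw [mem_ball, dist_eq_norm] at hzb
        rw [mem_closedBall, dist_eq_norm] at hz
        linarith
      have := hb z (by rw [mem_sphere, dist_eq_norm]; exact hzs)
      have hqz : q z = w z + ε * R ^ 2 := by simp only [hq, hzs]
      linarith
  refine le_of_forall_pos_le_add fun η hη => ?_
  have := key (η / (R ^ 2 + 1)) (by positivity)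
  have h2 : η / (R ^ 2 + 1) * R ^ 2 ≤ η := by
    rw [div_mul_eq_mul_div, div_le_iff₀ (by positivity)]; nlinarith
  linarith

lemma pot_cont (κ f : E2 → ℝ) (R : ℝ) (hκ : Measurable κ) (hκi : ∀ M, IntegrableOn κ (ball 0 M))
    (hf : Continuous f) : Continuous (fun x => ∫ y in ball (0:E2) R, κ (x - y) * f y) := by
  obtain ⟨B, hB⟩ := (isCompact_closedBall (0:E2) R).exists_bound_of_continuousOn hf.continuousOn
  set F : E2 → ℝ := (ball (0:E2) R).indicator f with hF
  have hFm : Measurable F := hf.measurable.indicator measurableSet_ball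
  have e : ∀ x, ∫ y in ball (0:E2) R, κ (x - y) * f y = ∫ z, κ z * F (x - z) := by
    intro x
    rw [← integral_indicator measurableSet_ball, ← integral_sub_left_eq_self _ _ x]
    congr 1; ext y
    simp only [hF, Set.indicator]
    split_ifs <;> simp
  simp_rw [e]
  rw [continuous_iff_continuousAt]
  intro x0
  have hFb : ∀ y, |F y| ≤ |B| := by
    intro y
    simp only [hF, Set.indicator]
    split_ifs with h
    · exact (hB y (ball_subset_closedBall h)).trans (le_abs_self B)
    · simp
  refine continuousAt_of_dominated (bound := (ball (0:E2) (‖x0‖ + 1 + |R|)).indicator (fun z => |κ z| * |B|)) ?_ ?_ ?_ ?_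
  · exact Eventually.of_forall fun x => (by fun_prop : Measurable _).aestronglyMeasurable
  · filter_upwards [ball_mem_nhds x0 one_pos] with x hx
    refine Eventually.of_forall fun z => ?_
    simp only [Set.indicator]
    split_ifs with h
    · rw [norm_mul]; exact mul_le_mul_of_nonneg_left (hFb _) (abs_nonneg _)
    · have : x - z ∉ ball (0:E2) R := by
        intro h2
        apply h
        rw [mem_ball_zero_iff] at *
        rw [mem_ball, dist_eq_norm] at hx
        have h3 : z = x0 + (x - x0) - (x - z) := by abel
        have h4 := norm_sub_le (x0 + (x - x0)) (x - z)
        have h5 := norm_add_le x0 (x - x0)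
        rw [← h3] at h4
        have := le_abs_self R
        linarith
      simp [hF, this]
  · rw [integrable_indicator_iff measurableSet_ball]
    exact ((hκi _).norm).mul_const _
  · have h0 : volume (sphere (0:E2) R) = 0 := by
      rcases eq_or_ne R 0 with h | h
      · subst h; simp
      · exact Measure.addHaar_sphere_of_ne_zero _ _ h
    have h1 : ∀ᵐ z : E2, z ∉ sphere (0:E2) R := measure_eq_zero_iff_ae_notMem.1 h0
    have h2 : ∀ᵐ z : E2, x0 - z ∉ sphere (0:E2) R :=
      (quasiMeasurePreserving_sub_left volume x0).ae h1
    filter_upwards [h2] with z hz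
    have h3 : ContinuousAt F (x0 - z) := by
      refine hf.continuousOn.continuousAt_indicator ?_
      intro h4
      exact hz (frontier_ball_subset_sphere h4)
    have h5 : ContinuousAt (fun x => F (x - z)) x0 := ContinuousAt.comp (f := fun x => x - z) h3 (by fun_prop)
    exact continuousAt_const.mul h5

noncomputable def kk (k : ℝ) (z : E2) : ℝ := Real.log k - Real.log ‖z‖

lemma kk_meas (k : ℝ) : Measurable (kk k) := by unfold kk; fun_prop

lemma kk_eq (k : ℝ) (hk : 0 < k) (z : E2) (hz : z ≠ 0) : kk k z = Real.log (k / ‖z‖) := by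
  rw [kk, Real.log_div hk.ne' (by simpa using hz)]

lemma kk_ae (k : ℝ) (hk : 0 < k) (x : E2) (f : E2 → ℝ) :
   (fun y => kk k (x - y) * f y) =ᵐ[volume] (fun y => Real.log (k / ‖x - y‖) * f y) := by
  have : ∀ᵐ y : E2, y ∉ ({x} : Set E2) := measure_eq_zero_iff_ae_notMem.1 (by simp)
  filter_upwards [this] with y hy
  rw [kk_eq k hk _ (sub_ne_zero.2 (fun h => hy (by simp [h])))]

lemma kk_int (k : ℝ) (hk : 0 < k) (c x : E2) (R : ℝ) (f : E2 → ℝ) (hf : Continuous f) :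
    IntegrableOn (fun y => kk k (x - y) * f y) (ball c R) := by
  obtain ⟨B, hB⟩ := (isCompact_closedBall c R).exists_bound_of_continuousOn hf.continuousOn
  exact (log_int k hk c x R B f hf.measurable (fun y hy => hB y (ball_subset_closedBall hy))).congr
    (EventuallyEq.symm (ae_restrict_of_ae (kk_ae k hk x f)))

lemma kk_loc (k : ℝ) (hk : 0 < k) (M : ℝ) : IntegrableOn (kk k) (ball 0 M) := by
  have := kk_int k hk 0 0 M (fun _ => 1) continuous_const
  refine this.congr (Eventually.of_forall fun y => ?_)
  simp [kk]

noncomputable def NN (R : ℝ) (f : E2 → ℝ) (x : E2) : ℝ := ∫ y in ball (0:E2) R, kk (2 * R) (x - y) * f y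

lemma NN_cont (R : ℝ) (hR : 0 < R) (f : E2 → ℝ) (hf : Continuous f) : Continuous (NN R f) :=
  pot_cont _ f R (kk_meas _) (kk_loc _ (by positivity)) hf

lemma NN_mean (R : ℝ) (hR : 0 < R) (f : E2 → ℝ) (hf : Continuous f) (x : E2) (ρ : ℝ) (hρ : 0 < ρ)
    (hs : closedBall x ρ ⊆ ball 0 R) :
    ∫ θ in (-Real.pi)..Real.pi, NN R f (x + ρ • ee θ) = 2 * Real.pi * NN R f x
      - 2 * Real.pi * ∫ y in ball x ρ, Real.log (ρ / ‖x - y‖) * f y := by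
  have h2R : 0 < 2 * R := by positivity
  have hpi : -Real.pi ≤ Real.pi := by linarith [Real.pi_pos]
  have hm : Measurable (Function.uncurry fun (θ : ℝ) (y : E2) => kk (2 * R) (x + ρ • ee θ - y) * f y) := by
    have := kk_meas (2 * R)
    have := hf.measurable
    have := continuous_ee.measurable
    unfold Function.uncurry
    fun_prop
  have hI : Integrable (Function.uncurry fun (θ : ℝ) (y : E2) => kk (2 * R) (x + ρ • ee θ - y) * f y)
      ((volume.restrict (Set.Ioc (-Real.pi) Real.pi)).prod (volume.restrict (ball (0:E2) R))) := by
    rw [integrable_prod_iff hm.aestronglyMeasurable]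
    have hy1 : ∀ θ : ℝ, Integrable (fun y => kk (2 * R) (x + ρ • ee θ - y) * f y) (volume.restrict (ball (0:E2) R)) :=
      fun θ => kk_int (2 * R) h2R 0 (x + ρ • ee θ) R f hf
    constructor
    · exact Eventually.of_forall hy1
    have hc := pot_cont (fun z => |kk (2*R) z|) (fun y => |f y|) R (kk_meas _).abs (fun M => (kk_loc _ h2R M).abs) hf.abs
    have hc2 : Continuous fun θ : ℝ => ∫ y in ball (0:E2) R, |kk (2*R) (x + ρ • ee θ - y)| * |f y| :=
      hc.comp (by fun_prop : Continuous fun θ => x + ρ • ee θ)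
    have := (hc2.intervalIntegrable (μ := volume) (-Real.pi) Real.pi)
    rw [intervalIntegrable_iff_integrableOn_Ioc_of_le hpi] at this
    simpa [Function.uncurry, IntegrableOn, abs_mul] using this
  unfold NN
  rw [intervalIntegral.integral_of_le hpi, integral_integral_swap hI]
  have e1 : ∀ y, ∫ θ in Set.Ioc (-Real.pi) Real.pi, kk (2 * R) (x + ρ • ee θ - y) * f y =
     2 * Real.pi * (kk (2*R) (x - y) * f y - (ball x ρ).indicator (fun y => kk ρ (x - y) * f y) y) := by
    intro y
    rw [← intervalIntegral.integral_of_le hpi, intervalIntegral.integral_mul_const]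
    unfold kk
    rw [intervalIntegral.integral_sub (by simp) (log_avg_int x y ρ), log_avg x y ρ hρ,
      intervalIntegral.integral_const, smul_eq_mul]
    simp only [Set.indicator, mem_ball, dist_eq_norm]
    rw [norm_sub_rev y x]
    split_ifs with h
    · rw [max_eq_left h.le]; ring
    · rw [max_eq_right (not_lt.1 h)]; ring
  simp_rw [e1]
  rw [integral_const_mul, integral_sub (kk_int _ h2R 0 _ R f hf), setIntegral_indicator measurableSet_ball,
    Set.inter_eq_right.2 (ball_subset_closedBall.trans hs), 
    integral_congr_ae (ae_restrict_of_ae (kk_ae ρ hρ x f))]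
  · ring
  · exact ((integrable_indicator_iff measurableSet_ball).2 (kk_int ρ hρ x x ρ f hf)).integrableOn

lemma NN_nonneg (R : ℝ) (hR : 0 < R) (f : E2 → ℝ) (hf0 : ∀ y ∈ ball (0:E2) R, 0 ≤ f y) (x : E2) (hx : x ∈ closedBall 0 R) :
    0 ≤ NN R f x := by
  unfold NN
  rw [integral_congr_ae (ae_restrict_of_ae (kk_ae (2 * R) (by positivity) x f))]
  refine setIntegral_nonneg measurableSet_ball fun y hy => mul_nonneg ?_ (hf0 y hy)
  have h1 : ‖x - y‖ ≤ 2 * R := by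
    rw [mem_closedBall_zero_iff] at hx; rw [mem_ball_zero_iff] at hy
    have := norm_sub_le x y
    linarith
  rcases (norm_nonneg (x - y)).eq_or_lt with h | h
  · rw [← h]; simp
  · exact Real.log_nonneg ((one_le_div h).2 h1)

/-- T1 -/
lemma upper_pot (U : E2 → ℝ) (hU : ContDiff ℝ 2 U) (R C1 : ℝ) (hR : 0 < R)
    (hf0 : ∀ y ∈ ball (0:E2) R, 0 ≤ -lapl U y) (hC : ∀ x ∈ sphere (0:E2) R, U x ≤ C1) :
    ∀ x ∈ closedBall (0:E2) R, 2 * Real.pi * U x ≤ 2 * Real.pi * C1 + NN R (fun y => -lapl U y) x := by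
  have cf : Continuous (fun y => -lapl U y) := (continuous_lapl U hU).neg
  have cN := NN_cont R hR _ cf
  have cU := hU.continuous
  intro x hx
  have := max_principle (fun x => 2 * Real.pi * U x - NN R (fun y => -lapl U y) x) 0 R (2 * Real.pi * C1)
    (by fun_prop) ?_ ?_ x hx
  · linarith
  · intro x hx
    obtain ⟨ρ, hρ, hs⟩ := nhds_basis_closedBall.mem_iff.1 (isOpen_ball.mem_nhds hx)
    refine ⟨ρ, hρ, hs, le_of_eq ?_⟩
    rw [intervalIntegral.integral_sub (Continuous.intervalIntegrable (by fun_prop) _ _) (Continuous.intervalIntegrable (by fun_prop) _ _),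
      intervalIntegral.integral_const_mul, circle_mean U hU x ρ hρ, NN_mean R hR _ cf x ρ hρ hs]
    simp_rw [mul_neg]
    rw [integral_neg]
    ring
  · intro x hx
    have h1 := NN_nonneg R hR _ hf0 x (sphere_subset_closedBall hx)
    have h2 := hC x hx
    nlinarith [Real.pi_pos]

structure Core (U : E2 → ℝ) (b C0 C1 R r : ℝ) : Prop where
  hU : ContDiff ℝ 2 U
  hR : 0 < R
  hr : 0 < r
  f0 : ∀ y ∈ ball (0:E2) R, 0 ≤ -lapl U y
  fb : ∀ y ∈ ball (0:E2) R, -lapl U y ≤ b * Real.exp (U y)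
  U0 : Real.exp (U 0) = (r ^ 2)⁻¹
  mx : ∀ y ∈ ball (0:E2) R, U y ≤ U 0
  ps : ∀ y ∈ closedBall (0:E2) R, 0 ≤ U y
  bd : ∀ y ∈ sphere (0:E2) R, U y ≤ C1
  ms : ∫ y in ball (0:E2) R, Real.exp (U y) ≤ C0

noncomputable def mm (U : E2 → ℝ) (ρ : ℝ) : ℝ := ∫ y in ball (0:E2) ρ, -lapl U y

section
variable {U : E2 → ℝ} {b C0 C1 R r : ℝ}

lemma Core.cf (h : Core U b C0 C1 R r) : Continuous (fun y => -lapl U y) := (continuous_lapl U h.hU).neg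

lemma cont_int (f : E2 → ℝ) (hf : Continuous f) (ρ : ℝ) : IntegrableOn f (ball (0:E2) ρ) :=
  (hf.continuousOn.integrableOn_compact (isCompact_closedBall (0:E2) ρ)).mono_set ball_subset_closedBall

lemma Core.fi (h : Core U b C0 C1 R r) (ρ : ℝ) : IntegrableOn (fun y => -lapl U y) (ball (0:E2) ρ) :=
  cont_int _ h.cf ρ

/-- mean value at 0 -/
lemma Core.mean0 (h : Core U b C0 C1 R r) (ρ : ℝ) (hρ : 0 < ρ) :
    (∫ θ in (-Real.pi)..Real.pi, U (ρ • ee θ)) = 2 * Real.pi * U 0 -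
      ∫ y in ball (0:E2) ρ, kk ρ (0 - y) * (-lapl U y) := by
  have := circle_mean U h.hU 0 ρ hρ
  simp only [zero_add] at this
  rw [this, integral_congr_ae (ae_restrict_of_ae (kk_ae ρ hρ 0 (fun y => -lapl U y)))]
  simp_rw [mul_neg]
  rw [integral_neg, sub_neg_eq_add]

lemma Core.low (h : Core U b C0 C1 R r) :
    ∫ y in ball (0:E2) R, kk R (0 - y) * (-lapl U y) ≤ 2 * Real.pi * U 0 := by
  have h1 := h.mean0 R h.hR
  have h2 : 0 ≤ ∫ θ in (-Real.pi)..Real.pi, U (R • ee θ) := by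
    refine intervalIntegral.integral_nonneg (by linarith [Real.pi_pos]) fun θ _ => h.ps _ ?_
    rw [mem_closedBall_zero_iff, norm_smul, norm_ee, mul_one, Real.norm_of_nonneg h.hR.le]
  linarith

lemma Core.diff (h : Core U b C0 C1 R r) (x : E2) (hx : x ∈ closedBall (0:E2) R) :
    2 * Real.pi * (U x - U 0) ≤ 2 * Real.pi * C1 + Real.log 2 * mm U R +
      ∫ y in ball (0:E2) R, (Real.log ‖y‖ - Real.log ‖x - y‖) * (-lapl U y) := by
  have hR := h.hR
  have h1 := upper_pot U h.hU R C1 hR h.f0 h.bd x hx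
  have h2 := h.low
  have i1 := kk_int (2 * R) (by positivity) 0 x R _ h.cf
  have i2 := kk_int R hR 0 0 R _ h.cf
  have e : ∫ y in ball (0:E2) R, (Real.log ‖y‖ - Real.log ‖x - y‖) * (-lapl U y) =
     NN R (fun y => -lapl U y) x - (∫ y in ball (0:E2) R, kk R (0 - y) * (-lapl U y)) - Real.log 2 * mm U R := by
    unfold NN mm
    have e3 := integral_sub (i1.sub i2) ((h.fi R).const_mul (Real.log 2))
    simp only [Pi.sub_apply] at e3
    rw [← integral_const_mul, ← integral_sub i1 i2, ← e3]
    congr 1; ext y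
    simp only [kk, zero_sub, norm_neg]
    rw [Real.log_mul two_ne_zero hR.ne']
    ring
  rw [e]; linarith

lemma diff_int (x : E2) (f : E2 → ℝ) (hf : Continuous f) (R : ℝ) :
    IntegrableOn (fun y => (Real.log ‖y‖ - Real.log ‖x - y‖) * f y) (ball (0:E2) R) := by
  have i1 := kk_int 1 (by positivity) 0 x R _ hf
  have i2 := kk_int 1 (by positivity) 0 0 R _ hf
  refine (i1.sub i2).congr (Eventually.of_forall fun y => ?_)
  simp only [kk, Pi.sub_apply, zero_sub, norm_neg]; ring

lemma pk_le (p : ℝ) (hp : 0 ≤ p) (a z : ℝ) (ha : 0 ≤ a) (hz : 0 ≤ z) :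
    (1 + a / z) ^ p ≤ 2 ^ p * (1 + a ^ p * z ^ (-p)) := by
  have h0 : a ^ p * z ^ (-p) = (a / z) ^ p := by
    rw [Real.div_rpow ha hz, Real.rpow_neg hz]; rfl
  have h1 : 0 ≤ a / z := by positivity
  rw [h0]
  rcases le_total (a / z) 1 with h | h
  · have : (1 + a / z) ^ p ≤ 2 ^ p := Real.rpow_le_rpow (by positivity) (by linarith) hp
    have h3 : 0 ≤ (a / z) ^ p := by positivity
    have h4 : 0 ≤ (2:ℝ) ^ p := by positivity
    nlinarith [mul_nonneg h4 h3]
  · have : (1 + a / z) ^ p ≤ (2 * (a / z)) ^ p := Real.rpow_le_rpow (by positivity) (by linarith) hp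
    rw [Real.mul_rpow (by norm_num) h1] at this
    have h4 : 0 ≤ (2:ℝ) ^ p := by positivity
    nlinarith

lemma pk_int (p : ℝ) (hp : 0 ≤ p) (hp2 : p < 2) (x : E2) (f : E2 → ℝ) (hf : Continuous f) (R : ℝ) :
    IntegrableOn (fun y => (1 + ‖x‖ / ‖x - y‖) ^ p * f y) (ball (0:E2) R) := by
  obtain ⟨B, hB⟩ := (isCompact_closedBall (0:E2) R).exists_bound_of_continuousOn hf.continuousOn
  have i0 : IntegrableOn (fun y => 2 ^ p * (1 + ‖x‖ ^ p * ‖x - y‖ ^ (-p)) * B) (ball (0:E2) R) := by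
    refine Integrable.mul_const (Integrable.const_mul (Integrable.add ?_ ((norm_rpow_int p hp2 0 x R).const_mul _)) _) _
    exact cont_int (fun _ => 1) continuous_const R
  refine i0.mono' ?_ ?_
  · have := hf.measurable
    exact (by fun_prop : Measurable _).aestronglyMeasurable
  · filter_upwards [ae_restrict_mem measurableSet_ball] with y hy
    rw [norm_mul, Real.norm_of_nonneg (by positivity)]
    exact mul_le_mul (pk_le p hp _ _ (norm_nonneg _) (norm_nonneg _)) (hB y (ball_subset_closedBall hy)) (by positivity) (by positivity)

/-- sub-probability Jensen -/
lemma jensen_sub {α : Type*} [MeasurableSpace α] (μ : Measure α) (F w : α → ℝ) (hw : Integrable w μ)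
    (hw0 : ∀ᵐ a ∂μ, 0 ≤ w a) (hF : Integrable (fun a => F a * w a) μ) (hE : Integrable (fun a => Real.exp (F a) * w a) μ)
    (h1 : ∫ a, w a ∂μ ≤ 1) : Real.exp (∫ a, F a * w a ∂μ) ≤ 1 + ∫ a, Real.exp (F a) * w a ∂μ := by
  set t := ∫ a, F a * w a ∂μ with ht
  set l := ∫ a, w a ∂μ with hl
  have hl0 : 0 ≤ l := integral_nonneg_of_ae hw0
  have key : ∫ a, (Real.exp t * (1 - t) * w a + Real.exp t * (F a * w a)) ∂μ ≤ ∫ a, Real.exp (F a) * w a ∂μ := by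
    refine integral_mono_ae ((hw.const_mul _).add (hF.const_mul _)) hE ?_
    filter_upwards [hw0] with a ha
    have h2 := Real.add_one_le_exp (F a - t)
    have h3 : Real.exp (F a) = Real.exp t * Real.exp (F a - t) := by rw [← Real.exp_add]; ring_nf
    have h4 : Real.exp t * (1 - t) * w a + Real.exp t * (F a * w a) = Real.exp t * (F a - t + 1) * w a := by ring
    rw [h3, h4]
    gcongr
  rw [integral_add (hw.const_mul _) (hF.const_mul _), integral_const_mul, integral_const_mul, ← ht, ← hl] at key
  have h5 := Real.add_one_le_exp (-t)
  have h6 : Real.exp t * Real.exp (-t) = 1 := by rw [← Real.exp_add]; simp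
  have h7 := Real.exp_pos t
  have h8 : 0 ≤ (1 - l) * (Real.exp t * (Real.exp (-t) - (-t + 1))) :=
    mul_nonneg (by linarith) (mul_nonneg h7.le (by linarith))
  nlinarith

lemma Core.ptwise (h : Core U b C0 C1 R r) (a0 p ρ0 : ℝ) (hp : 0 < p) (hp2 : p < 2) (hρ0 : 0 < ρ0) (hρR : ρ0 ≤ R)
    (hm : 2 * Real.pi * a0 ≤ mm U ρ0) (hrest : mm U R - mm U ρ0 ≤ 2 * Real.pi * p) (x : E2) (hx : 2 * ρ0 ≤ ‖x‖)
    (hxR : ‖x‖ ≤ R) :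
    Real.exp (U x) ≤ (r ^ 2)⁻¹ * Real.exp (C1 + Real.log 2 * mm U R / (2 * Real.pi)) * (2 * ρ0 / ‖x‖) ^ a0 *
      (1 + ∫ y in ball (0:E2) R \ ball (0:E2) ρ0, (1 + ‖x‖ / ‖x - y‖) ^ p * (-lapl U y / (2 * Real.pi * p))) := by
  have hpi := Real.pi_pos
  set f : E2 → ℝ := fun y => -lapl U y with hf
  have cf : Continuous f := h.cf
  have hx0 : 0 < ‖x‖ := by linarith
  have hsub : ball (0:E2) ρ0 ⊆ ball 0 R := ball_subset_ball hρR
  have hd := h.diff x (by simpa using hxR)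
  have hne : ∀ᵐ y : E2, y ∉ ({x, 0} : Set E2) := measure_eq_zero_iff_ae_notMem.1 (Set.Finite.measure_zero (by simp) _)
  set rest := ball (0:E2) R \ ball (0:E2) ρ0 with hrst
  have hrm : MeasurableSet rest := measurableSet_ball.diff measurableSet_ball
  have isp := diff_int x f cf R
  have hsplit : ∀ g : E2 → ℝ, IntegrableOn g (ball (0:E2) R) → ∫ y in ball (0:E2) R, g y = (∫ y in ball (0:E2) ρ0, g y) + ∫ y in rest, g y := by
    intro g hg
    rw [← setIntegral_union (Set.disjoint_sdiff_right) hrm (hg.mono_set hsub) (hg.mono_set Set.sdiff_subset), Set.union_sdiff_cancel hsub]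
  have hcore : ∫ y in ball (0:E2) ρ0, (Real.log ‖y‖ - Real.log ‖x - y‖) * f y ≤ 2 * Real.pi * (a0 * Real.log (2 * ρ0 / ‖x‖)) := by
    have hlog : Real.log (2 * ρ0 / ‖x‖) ≤ 0 := Real.log_nonpos (by positivity) ((div_le_one hx0).2 hx)
    have : ∫ y in ball (0:E2) ρ0, (Real.log ‖y‖ - Real.log ‖x - y‖) * f y ≤ ∫ y in ball (0:E2) ρ0, Real.log (2 * ρ0 / ‖x‖) * f y := by
      refine integral_mono_ae (isp.mono_set hsub) ((cont_int f cf ρ0).const_mul _) ?_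
      filter_upwards [ae_restrict_mem measurableSet_ball, ae_restrict_of_ae hne] with y hy hyn
      have hy' := hy
      rw [mem_ball_zero_iff] at hy
      simp only [Set.mem_insert_iff, Set.mem_singleton_iff, not_or] at hyn
      refine mul_le_mul_of_nonneg_right ?_ (h.f0 y (hsub hy'))
      have hy0 : 0 < ‖y‖ := norm_pos_iff.2 hyn.2
      have hxy : 0 < ‖x - y‖ := norm_pos_iff.2 (sub_ne_zero.2 (Ne.symm hyn.1))
      rw [← Real.log_div hy0.ne' hxy.ne']
      refine Real.log_le_log (by positivity) ?_
      rw [div_le_div_iff₀ hxy hx0]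
      have := norm_sub_norm_le x y
      nlinarith
    rw [integral_const_mul] at this
    have h2 : ∫ y in ball (0:E2) ρ0, f y = mm U ρ0 := rfl
    rw [h2] at this
    nlinarith
  have ipk := pk_int p hp.le hp2 x (fun y => f y / (2 * Real.pi * p)) (by fun_prop) R
  have ilg : IntegrableOn (fun y => (p * Real.log (1 + ‖x‖ / ‖x - y‖)) * (f y / (2 * Real.pi * p))) (ball (0:E2) R) := by
    have i3 := (pk_int 1 zero_le_one one_lt_two x (fun y => p * (f y / (2 * Real.pi * p))) (by fun_prop) R)
    refine Integrable.mono i3 ?_ ?_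
    · have := cf.measurable
      exact (by fun_prop : Measurable _).aestronglyMeasurable
    · refine Eventually.of_forall fun y => ?_
      rw [show p * Real.log (1 + ‖x‖ / ‖x - y‖) * (f y / (2 * Real.pi * p)) = Real.log (1 + ‖x‖ / ‖x - y‖) * (p * (f y / (2 * Real.pi * p))) by ring]
      rw [Real.rpow_one, norm_mul (Real.log _), norm_mul (1 + _)]
      have h1 : 0 ≤ ‖x‖ / ‖x - y‖ := by positivity
      have h2 : 0 ≤ Real.log (1 + ‖x‖ / ‖x - y‖) := Real.log_nonneg (by linarith)
      rw [Real.norm_of_nonneg h2, Real.norm_of_nonneg (by linarith : 0 ≤ 1 + ‖x‖ / ‖x - y‖)]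
      gcongr
      exact Real.log_le_self (by linarith)
  have hrestle : ∫ y in rest, (Real.log ‖y‖ - Real.log ‖x - y‖) * f y ≤ 2 * Real.pi * ∫ y in rest, (p * Real.log (1 + ‖x‖ / ‖x - y‖)) * (f y / (2 * Real.pi * p)) := by
    rw [← integral_const_mul]
    refine integral_mono_ae (isp.mono_set Set.sdiff_subset) ((ilg.mono_set Set.sdiff_subset).const_mul _) ?_
    filter_upwards [ae_restrict_mem hrm, ae_restrict_of_ae hne] with y hy hyn
    simp only [Set.mem_insert_iff, Set.mem_singleton_iff, not_or] at hyn
    have hy0 : 0 < ‖y‖ := norm_pos_iff.2 hyn.2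
    have hxy : 0 < ‖x - y‖ := norm_pos_iff.2 (sub_ne_zero.2 (Ne.symm hyn.1))
    have e : 2 * Real.pi * (p * Real.log (1 + ‖x‖ / ‖x - y‖) * (f y / (2 * Real.pi * p))) = Real.log (1 + ‖x‖ / ‖x - y‖) * f y := by
      field_simp
    rw [e]
    refine mul_le_mul_of_nonneg_right ?_ (h.f0 y hy.1)
    rw [← Real.log_div hy0.ne' hxy.ne']
    refine Real.log_le_log (by positivity) ?_
    rw [div_le_iff₀ hxy, add_mul, one_mul, div_mul_cancel₀ _ hxy.ne']
    have := norm_sub_norm_le y x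
    rw [norm_sub_rev] at this
    linarith
  have eexp : ∀ y, Real.exp (p * Real.log (1 + ‖x‖ / ‖x - y‖)) = (1 + ‖x‖ / ‖x - y‖) ^ p := by
    intro y
    rw [Real.rpow_def_of_pos (by positivity), mul_comm]
  have hJ := jensen_sub (volume.restrict rest) (fun y => p * Real.log (1 + ‖x‖ / ‖x - y‖)) (fun y => f y / (2 * Real.pi * p))
    (((cont_int f cf R).mono_set Set.sdiff_subset).div_const _)
    (by filter_upwards [ae_restrict_mem hrm] with y hy; exact div_nonneg (h.f0 y hy.1) (by positivity))
    (ilg.mono_set Set.sdiff_subset) (by simp_rw [eexp]; exact ipk.mono_set Set.sdiff_subset)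
    (by
      rw [integral_div, div_le_one (by positivity)]
      have := hsplit f (cont_int f cf R)
      have h2 : ∫ y in ball (0:E2) ρ0, f y = mm U ρ0 := rfl
      have h3 : ∫ y in ball (0:E2) R, f y = mm U R := rfl
      linarith)
  simp_rw [eexp] at hJ
  refine le_trans ?_ (mul_le_mul_of_nonneg_left hJ (by positivity))
  rw [hsplit _ isp] at hd
  rw [← h.U0, Real.rpow_def_of_pos (by positivity), ← Real.exp_add, ← Real.exp_add, ← Real.exp_add, Real.exp_le_exp]
  have : 2 * Real.pi * (U x - U 0) ≤ 2 * Real.pi * (C1 + Real.log 2 * mm U R / (2 * Real.pi) + Real.log (2 * ρ0 / ‖x‖) * a0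
    + ∫ y in rest, (p * Real.log (1 + ‖x‖ / ‖x - y‖)) * (f y / (2 * Real.pi * p))) := by
    have e2 : 2 * Real.pi * (Real.log 2 * mm U R / (2 * Real.pi)) = Real.log 2 * mm U R := by field_simp
    linarith
  have := le_of_mul_le_mul_left this (by positivity)
  linarith
end

noncomputable def KC (p a : ℝ) : ℝ := 2 ^ p * (2 * Real.pi * (1 / (a - 2))) + 2 ^ p * (2 * Real.pi * (1 / (2 - p)) + 2 * Real.pi * (1 / (a - 2)))

lemma KC_pos (p a : ℝ) (hp2 : p < 2) (ha : 2 < a) : 0 < KC p a := by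
  have h1 : 0 < a - 2 := by linarith
  have h2 : 0 < 2 - p := by linarith
  have := Real.pi_pos
  unfold KC; positivity

lemma kernel_bd (p a ρ1 : ℝ) (hp : 0 < p) (hp2 : p < 2) (ha : 2 < a) (hρ : 0 < ρ1) (y : E2) :
    ∫⁻ x in (ball (0:E2) ρ1)ᶜ, ENNReal.ofReal (‖x‖ ^ (-a) * (1 + ‖x‖ / ‖x - y‖) ^ p) ≤
      ENNReal.ofReal (KC p a * ρ1 ^ (2 - a)) := by
  have h1 : 0 < a - 2 := by linarith
  have h2 : 0 < 2 - p := by linarith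
  have hpi := Real.pi_pos
  have pw : ∀ x ∈ (ball (0:E2) ρ1)ᶜ, ENNReal.ofReal (‖x‖ ^ (-a) * (1 + ‖x‖ / ‖x - y‖) ^ p) ≤
     ENNReal.ofReal (2 ^ p) * ENNReal.ofReal (‖x‖ ^ (-a)) + ENNReal.ofReal (2 ^ p) * ENNReal.ofReal (‖x - y‖ ^ (-p) * (max ρ1 ‖x - y‖) ^ (p - a)) := by
    intro x hx
    have hx1 : ρ1 ≤ ‖x‖ := by simpa using hx
    have hx0 : 0 < ‖x‖ := by linarith
    rw [← ENNReal.ofReal_mul (by positivity), ← ENNReal.ofReal_mul (by positivity), ← ENNReal.ofReal_add (by positivity) (by positivity)]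
    refine ENNReal.ofReal_le_ofReal ?_
    rcases le_total ‖x‖ ‖x - y‖ with h | h
    · have : (1 + ‖x‖ / ‖x - y‖) ^ p ≤ 2 ^ p := by
        refine Real.rpow_le_rpow (by positivity) ?_ hp.le
        have : ‖x‖ / ‖x - y‖ ≤ 1 := div_le_one_of_le₀ h (norm_nonneg _)
        linarith
      have h3 : 0 ≤ 2 ^ p * (‖x - y‖ ^ (-p) * (max ρ1 ‖x - y‖) ^ (p - a)) := by positivity
      have h4 : 0 ≤ ‖x‖ ^ (-a) := by positivity
      nlinarith
    · have h3 := pk_le p hp.le ‖x‖ ‖x - y‖ (norm_nonneg _) (norm_nonneg _)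
      have h4 : ‖x‖ ^ (p - a) ≤ (max ρ1 ‖x - y‖) ^ (p - a) :=
        Real.rpow_le_rpow_of_nonpos (by positivity) (max_le hx1 h) (by linarith)
      have h5 : ‖x‖ ^ (-a) * ‖x‖ ^ p = ‖x‖ ^ (p - a) := by
        rw [← Real.rpow_add hx0]; ring_nf
      calc ‖x‖ ^ (-a) * (1 + ‖x‖ / ‖x - y‖) ^ p ≤ ‖x‖ ^ (-a) * (2 ^ p * (1 + ‖x‖ ^ p * ‖x - y‖ ^ (-p))) := by gcongr
        _ = 2 ^ p * ‖x‖ ^ (-a) + 2 ^ p * (‖x - y‖ ^ (-p) * (‖x‖ ^ (-a) * ‖x‖ ^ p)) := by ring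
        _ ≤ _ := by rw [h5]; gcongr
  refine (setLIntegral_mono' measurableSet_ball.compl pw).trans ?_
  rw [lintegral_add_left (by fun_prop), lintegral_const_mul _ (by fun_prop), lintegral_const_mul _ (by fun_prop), pow_far a ρ1 ha hρ]
  have hz : ∫⁻ x in (ball (0:E2) ρ1)ᶜ, ENNReal.ofReal (‖x - y‖ ^ (-p) * (max ρ1 ‖x - y‖) ^ (p - a)) ≤
      ENNReal.ofReal ((2 * Real.pi * (1 / (2 - p)) + 2 * Real.pi * (1 / (a - 2))) * ρ1 ^ (2 - a)) := by
    refine (lintegral_mono_set (Set.subset_univ _)).trans ?_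
    rw [setLIntegral_univ, lintegral_sub_right_eq_self (fun z : E2 => ENNReal.ofReal (‖z‖ ^ (-p) * (max ρ1 ‖z‖) ^ (p - a))) y,
      ← lintegral_add_compl _ (measurableSet_ball (x := (0:E2)) (ε := ρ1))]
    have e1 : ∫⁻ z in ball (0:E2) ρ1, ENNReal.ofReal (‖z‖ ^ (-p) * (max ρ1 ‖z‖) ^ (p - a)) = ENNReal.ofReal (ρ1 ^ (p - a)) * ENNReal.ofReal (2 * Real.pi * (ρ1 ^ (2 - p) / (2 - p))) := by
      rw [← pow_near p ρ1 hp2 hρ, ← lintegral_const_mul _ (by fun_prop)]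
      refine setLIntegral_congr_fun measurableSet_ball fun z hz => ?_
      simp only [mem_ball_zero_iff] at hz
      rw [max_eq_left hz.le, ENNReal.ofReal_mul (by positivity), mul_comm]
    have e2 : ∫⁻ z in (ball (0:E2) ρ1)ᶜ, ENNReal.ofReal (‖z‖ ^ (-p) * (max ρ1 ‖z‖) ^ (p - a)) = ENNReal.ofReal (2 * Real.pi * (ρ1 ^ (2 - a) / (a - 2))) := by
      rw [← pow_far a ρ1 ha hρ]
      refine setLIntegral_congr_fun measurableSet_ball.compl fun z hz => ?_
      have hz1 : ρ1 ≤ ‖z‖ := by simpa using hz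
      rw [max_eq_right hz1, ← Real.rpow_add (by linarith)]
      ring_nf
    rw [e1, e2, ← ENNReal.ofReal_mul (by positivity), ← ENNReal.ofReal_add (by positivity) (by positivity)]
    refine le_of_eq (congrArg _ ?_)
    have : ρ1 ^ (2 - a) = ρ1 ^ (p - a) * ρ1 ^ (2 - p) := by rw [← Real.rpow_add hρ]; ring_nf
    rw [this]; ring
  refine (add_le_add_right (mul_le_mul_right hz _) _).trans ?_
  rw [← ENNReal.ofReal_mul (by positivity), ← ENNReal.ofReal_mul (by positivity), ← ENNReal.ofReal_add (by positivity) (by positivity)]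
  refine le_of_eq (congrArg _ ?_)
  unfold KC; ring

set_option maxHeartbeats 1000000 in
lemma Core.tail {U : E2 → ℝ} {b C0 C1 R r : ℝ} (h : Core U b C0 C1 R r) (a0 p σ ρ0 ρ1 : ℝ) (hp : 0 < p) (hp2 : p < 2) (hρ0 : 0 < ρ0) (hρR : ρ0 ≤ R)
    (hm : 2 * Real.pi * a0 ≤ mm U ρ0) (hrest : mm U R - mm U ρ0 ≤ 2 * Real.pi * p) (hρ1 : 2 * ρ0 ≤ ρ1) (ha : 2 < a0 - σ) :
    ∫⁻ x in ball (0:E2) R \ ball 0 ρ1, ENNReal.ofReal (‖x‖ ^ σ * Real.exp (U x)) ≤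
      ENNReal.ofReal ((r ^ 2)⁻¹ * Real.exp (C1 + Real.log 2 * mm U R / (2 * Real.pi)) * (2 * ρ0) ^ a0 *
        (2 * KC p (a0 - σ) * ρ1 ^ (2 - (a0 - σ)))) := by
  have hpi := Real.pi_pos
  set a := a0 - σ with haa
  set A := (r ^ 2)⁻¹ * Real.exp (C1 + Real.log 2 * mm U R / (2 * Real.pi)) * (2 * ρ0) ^ a0 with hA
  have hA0 : 0 ≤ A := by positivity
  set rest := ball (0:E2) R \ ball (0:E2) ρ0 with hrst
  have hrm : MeasurableSet rest := measurableSet_ball.diff measurableSet_ball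
  have cf := h.cf
  have mf := cf.measurable
  set w : E2 → ℝ := fun y => -lapl U y / (2 * Real.pi * p) with hw
  have cw : Continuous w := cf.div_const _
  have hw0 : ∀ y ∈ rest, 0 ≤ w y := fun y hy => div_nonneg (h.f0 y hy.1) (by positivity)
  have hρ1' : 0 < ρ1 := by linarith
  have hwm : ∫⁻ y in rest, ENNReal.ofReal (w y) ≤ 1 := by
    rw [← ofReal_integral_eq_lintegral_ofReal ((cont_int w cw R).mono_set Set.sdiff_subset)
      (by filter_upwards [ae_restrict_mem hrm] with y hy using hw0 y hy)]
    rw [ENNReal.ofReal_le_one, hw, integral_div, div_le_one (by positivity)]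
    have h3 := setIntegral_union (f := fun y => -lapl U y) (μ := volume) (Set.disjoint_sdiff_right (s := ball (0:E2) ρ0) (t := ball (0:E2) R)) hrm (h.fi ρ0) ((h.fi R).mono_set Set.sdiff_subset)
    rw [Set.union_sdiff_cancel (ball_subset_ball hρR)] at h3
    unfold mm at hrest
    linarith
  set κ : E2 → E2 → ENNReal := fun x y => ENNReal.ofReal (‖x‖ ^ (-a) * (1 + ‖x‖ / ‖x - y‖) ^ p) with hκ
  have pw : ∀ x ∈ ball (0:E2) R \ ball 0 ρ1, ENNReal.ofReal (‖x‖ ^ σ * Real.exp (U x)) ≤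
      ENNReal.ofReal A * (κ x 0 + ∫⁻ y in rest, κ x y * ENNReal.ofReal (w y)) := by
    intro x hx
    have hx1 : ρ1 ≤ ‖x‖ := by simpa using hx.2
    have hxR : ‖x‖ < R := by simpa using hx.1
    have hx0 : 0 < ‖x‖ := by linarith
    have h1 := h.ptwise a0 p ρ0 hp hp2 hρ0 hρR hm hrest x (by linarith) hxR.le
    obtain ⟨I, hI⟩ : ∃ I, I = ∫ y in rest, (1 + ‖x‖ / ‖x - y‖) ^ p * w y := ⟨_, rfl⟩
    rw [← hI] at h1
    have hIi : IntegrableOn (fun y => (1 + ‖x‖ / ‖x - y‖) ^ p * w y) rest := (pk_int p hp.le hp2 x w cw R).mono_set Set.sdiff_subset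
    have hI0 : 0 ≤ I := by
      rw [hI]
      exact setIntegral_nonneg hrm fun y hy => mul_nonneg (by positivity) (hw0 y hy)
    have h2 : ‖x‖ ^ σ * Real.exp (U x) ≤ A * (‖x‖ ^ (-a) + ‖x‖ ^ (-a) * I) := by
      calc ‖x‖ ^ σ * Real.exp (U x) ≤ ‖x‖ ^ σ * ((r ^ 2)⁻¹ * Real.exp (C1 + Real.log 2 * mm U R / (2 * Real.pi)) * (2 * ρ0 / ‖x‖) ^ a0 * (1 + I)) := by gcongr
        _ = _ := by
          rw [Real.div_rpow (by positivity) (by positivity), haa, hA, neg_sub, Real.rpow_sub hx0]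
          field_simp
    refine (ENNReal.ofReal_le_ofReal h2).trans ?_
    rw [ENNReal.ofReal_mul hA0, ENNReal.ofReal_add (Real.rpow_nonneg (norm_nonneg x) _) (mul_nonneg (Real.rpow_nonneg (norm_nonneg x) _) hI0)]
    refine mul_le_mul_right (add_le_add ?_ ?_) _
    · refine ENNReal.ofReal_le_ofReal ?_
      have : 1 ≤ (1 + ‖x‖ / ‖x - 0‖) ^ p := Real.one_le_rpow (by simp; positivity) hp.le
      have h4 : 0 ≤ ‖x‖ ^ (-a) := by positivity
      nlinarith
    · rw [hI, ← integral_const_mul, ofReal_integral_eq_lintegral_ofReal (hIi.const_mul _)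
        (by filter_upwards [ae_restrict_mem hrm] with y hy using mul_nonneg (by positivity) (mul_nonneg (by positivity) (hw0 y hy)))]
      refine le_of_eq (lintegral_congr fun y => ?_)
      rw [hκ, ← ENNReal.ofReal_mul (by positivity), mul_assoc]
  have hκm : Measurable (Function.uncurry κ) := by
    simp only [hκ]; unfold Function.uncurry; fun_prop
  have hκ1 : ∀ y, Measurable fun x => κ x y := fun y => by simp only [hκ]; fun_prop
  have hB : ∀ y, ∫⁻ x in ball (0:E2) R \ ball 0 ρ1, κ x y ≤ ENNReal.ofReal (KC p a * ρ1 ^ (2 - a)) := fun y =>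
    (lintegral_mono_set (fun x hx => hx.2)).trans (kernel_bd p a ρ1 hp hp2 ha hρ1' y)
  refine (setLIntegral_mono' (measurableSet_ball.diff measurableSet_ball) pw).trans ?_
  have mw : Measurable w := cw.measurable
  have hsw : ∫⁻ x in ball (0:E2) R \ ball 0 ρ1, ∫⁻ y in rest, κ x y * ENNReal.ofReal (w y) ≤ ENNReal.ofReal (KC p a * ρ1 ^ (2 - a)) := by
    rw [lintegral_lintegral_swap]
    · have : ∀ y, ∫⁻ x in ball (0:E2) R \ ball 0 ρ1, κ x y * ENNReal.ofReal (w y) ≤ ENNReal.ofReal (KC p a * ρ1 ^ (2 - a)) * ENNReal.ofReal (w y) := by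
        intro y
        rw [lintegral_mul_const _ (hκ1 y)]
        exact mul_le_mul_left (hB y) _
      refine (lintegral_mono this).trans ?_
      rw [lintegral_const_mul _ (by fun_prop)]
      exact (mul_le_mul_right hwm _).trans (by rw [mul_one])
    · refine Measurable.aemeasurable ?_
      have : Measurable fun q : E2 × E2 => κ q.1 q.2 := hκm
      unfold Function.uncurry
      fun_prop
  rw [lintegral_const_mul', lintegral_add_left (hκ1 0)]
  · refine (mul_le_mul_right (add_le_add (hB 0) hsw) _).trans ?_
    have hK := KC_pos p a hp2 ha
    rw [← ENNReal.ofReal_add (by positivity) (by positivity), ← ENNReal.ofReal_mul hA0]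
    refine le_of_eq (congrArg _ ?_)
    ring
  · exact ENNReal.ofReal_ne_top

section
variable {U : E2 → ℝ} {b C0 C1 R r : ℝ}

lemma Core.b0 (h : Core U b C0 C1 R r) : 0 ≤ b := by
  have h1 := h.f0 0 (by simpa using h.hR)
  have h2 := h.fb 0 (by simpa using h.hR)
  have h3 := Real.exp_pos (U 0)
  by_contra hb
  nlinarith [not_le.1 hb]

lemma Core.mm_mono (h : Core U b C0 C1 R r) (ρ1 ρ2 : ℝ) (h12 : ρ1 ≤ ρ2) (h2 : ρ2 ≤ R) : mm U ρ1 ≤ mm U ρ2 := by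
  refine setIntegral_mono_set (h.fi ρ2) ?_ (ball_subset_ball h12).eventuallyLE
  filter_upwards [ae_restrict_mem measurableSet_ball] with y hy using h.f0 y (ball_subset_ball h2 hy)

lemma Core.fr (h : Core U b C0 C1 R r) (y : E2) (hy : y ∈ ball (0:E2) R) : -lapl U y ≤ b * (r ^ 2)⁻¹ := by
  refine (h.fb y hy).trans (mul_le_mul_of_nonneg_left ?_ h.b0)
  rw [← h.U0]; exact Real.exp_le_exp.2 (h.mx y hy)

lemma int_inv (ρ : ℝ) (hρ : 0 < ρ) : ∫ y in ball (0:E2) ρ, ‖y‖ ^ (-(1:ℝ)) = 2 * Real.pi * ρ := by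
  have hpi := Real.pi_pos
  rw [integral_eq_lintegral_of_nonneg_ae (Eventually.of_forall fun y => by positivity) (by fun_prop : Measurable _).aestronglyMeasurable,
    pow_near 1 ρ (by norm_num) hρ, ENNReal.toReal_ofReal (by norm_num; positivity)]
  norm_num

/-- lower bound for circle means of `U` -/
lemma Core.circ_low (h : Core U b C0 C1 R r) (ρ : ℝ) (h1 : r ≤ ρ) (h2 : ρ ≤ R) :
    2 * Real.pi * U 0 - Real.log (ρ / r) * mm U ρ - 2 * Real.pi * b ≤ ∫ θ in (-Real.pi)..Real.pi, U (ρ • ee θ) := by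
  have hr := h.hr
  have hρ : 0 < ρ := by linarith
  have hb := h.b0
  have hpi := Real.pi_pos
  have hsub : ball (0:E2) r ⊆ ball 0 ρ := ball_subset_ball h1
  have hsubR : ball (0:E2) ρ ⊆ ball 0 R := ball_subset_ball h2
  rw [h.mean0 ρ hρ]
  have hne : ∀ᵐ y : E2, y ∉ ({0} : Set E2) := measure_eq_zero_iff_ae_notMem.1 (by simp)
  set g : E2 → ℝ := fun y => b * (r ^ 2)⁻¹ * r * ‖y‖ ^ (-(1:ℝ)) with hg
  have gi : IntegrableOn g (ball 0 r) := by
    have := norm_rpow_int 1 (by norm_num) 0 0 r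
    simp only [zero_sub, norm_neg] at this
    exact this.const_mul _
  have gi2 : IntegrableOn ((ball (0:E2) r).indicator g) (ball 0 ρ) := ((integrable_indicator_iff measurableSet_ball).2 gi).integrableOn
  have key : ∫ y in ball (0:E2) ρ, kk ρ (0 - y) * (-lapl U y) ≤ ∫ y in ball (0:E2) ρ, (Real.log (ρ / r) * (-lapl U y) + (ball (0:E2) r).indicator g y) := by
    refine integral_mono_ae (kk_int ρ hρ 0 0 ρ _ h.cf) (((h.fi ρ).const_mul _).add gi2) ?_
    filter_upwards [ae_restrict_mem measurableSet_ball, ae_restrict_of_ae hne] with y hy hyn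
    have hy0 : 0 < ‖y‖ := norm_pos_iff.2 hyn
    have hf0 := h.f0 y (hsubR hy)
    have e : kk ρ (0 - y) = Real.log (ρ / r) + Real.log (r / ‖y‖) := by
      rw [kk, zero_sub, norm_neg, Real.log_div hρ.ne' hr.ne', Real.log_div hr.ne' hy0.ne']; ring
    rw [e, add_mul]
    refine add_le_add le_rfl ?_
    by_cases hyr : y ∈ ball (0:E2) r
    · rw [Set.indicator_of_mem hyr]
      have hl : Real.log (r / ‖y‖) ≤ r * ‖y‖ ^ (-(1:ℝ)) := by
        rw [Real.rpow_neg_one]; exact Real.log_le_self (by positivity)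
      calc Real.log (r / ‖y‖) * (-lapl U y) ≤ (r * ‖y‖ ^ (-(1:ℝ))) * (-lapl U y) := by gcongr
        _ ≤ (r * ‖y‖ ^ (-(1:ℝ))) * (b * (r ^ 2)⁻¹) := mul_le_mul_of_nonneg_left (h.fr y (hsubR hy)) (by positivity)
        _ = _ := by simp only [hg]; ring
    · rw [Set.indicator_of_notMem hyr]
      have : r ≤ ‖y‖ := by simpa using hyr
      exact mul_nonpos_of_nonpos_of_nonneg (Real.log_nonpos (by positivity) ((div_le_one hy0).2 this)) hf0
  rw [integral_add ((h.fi ρ).const_mul _) gi2, integral_const_mul, setIntegral_indicator measurableSet_ball,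
    Set.inter_eq_right.2 hsub, hg, integral_const_mul, int_inv r hr] at key
  have e2 : b * (r ^ 2)⁻¹ * r * (2 * Real.pi * r) = 2 * Real.pi * b := by field_simp
  rw [e2] at key
  unfold mm
  linarith

lemma jensen_circ (g : ℝ → ℝ) (hg : Continuous g) (m : ℝ) (h : 2 * Real.pi * m ≤ ∫ θ in (-Real.pi)..Real.pi, g θ) :
    2 * Real.pi * Real.exp m ≤ ∫ θ in (-Real.pi)..Real.pi, Real.exp (g θ) := by
  have hpi := Real.pi_pos
  have h1 : ∫ θ in (-Real.pi)..Real.pi, (Real.exp m * (1 - m) + Real.exp m * g θ) ≤ ∫ θ in (-Real.pi)..Real.pi, Real.exp (g θ) := by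
    refine intervalIntegral.integral_mono_on (by linarith) (Continuous.intervalIntegrable (by fun_prop) _ _)
      (Continuous.intervalIntegrable (by fun_prop) _ _) fun θ _ => ?_
    have h2 := Real.add_one_le_exp (g θ - m)
    have h3 : Real.exp (g θ) = Real.exp m * Real.exp (g θ - m) := by rw [← Real.exp_add]; ring_nf
    have := Real.exp_pos m
    rw [h3]; nlinarith
  rw [intervalIntegral.integral_add (Continuous.intervalIntegrable (by fun_prop) _ _)
      (Continuous.intervalIntegrable (by fun_prop) _ _), intervalIntegral.integral_const_mul _ (fun x => g x), intervalIntegral.integral_const, smul_eq_mul] at h1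
  have := Real.exp_pos m
  nlinarith

lemma Core.mass_dichotomy (h : Core U b C0 C1 R r) (R0 : ℝ) (hR0 : 1 < R0) (hR : R0 * r ≤ R)
    (hm : mm U (R0 * r) ≤ 4 * Real.pi + 2 * Real.pi / Real.log R0) :
    2 * Real.pi * Real.exp (-1 - b) * Real.log R0 ≤ C0 := by
  have hr := h.hr
  have hpi := Real.pi_pos
  have cU := h.hU.continuous
  have hl := Real.log_pos hR0
  have hrR : r ≤ R0 * r := by nlinarith
  have hc : ∀ ρ ∈ Set.Icc r (R0 * r), 2 * Real.pi * Real.exp (-1 - b) * ρ⁻¹ ≤ ρ * ∫ θ in (-Real.pi)..Real.pi, Real.exp (U (0 + ρ • ee θ)) := by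
    intro ρ hρ
    have hρ0 : 0 < ρ := by linarith [hρ.1]
    have h1 := h.circ_low ρ hρ.1 (hρ.2.trans hR)
    have h2 : mm U ρ ≤ 4 * Real.pi + 2 * Real.pi / Real.log R0 := (h.mm_mono ρ _ hρ.2 hR).trans hm
    have h3 : 0 ≤ Real.log (ρ / r) := Real.log_nonneg ((one_le_div hr).2 hρ.1)
    have h4 : Real.log (ρ / r) ≤ Real.log R0 := Real.log_le_log (by positivity) ((div_le_iff₀ hr).2 hρ.2)
    have h5 : Real.log (ρ / r) * mm U ρ ≤ 2 * Real.pi * (2 * Real.log (ρ / r) + 1) := by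
      have : Real.log (ρ / r) * mm U ρ ≤ Real.log (ρ / r) * (4 * Real.pi + 2 * Real.pi / Real.log R0) := by gcongr
      have h6 : Real.log (ρ / r) * (2 * Real.pi / Real.log R0) ≤ 2 * Real.pi := by
        rw [mul_div_assoc', div_le_iff₀ hl]; nlinarith
      nlinarith
    have h7 := jensen_circ (fun θ => U (ρ • ee θ)) (by fun_prop) (U 0 + (-2 * Real.log (ρ / r)) + (-1 - b)) (by linarith)
    have e1 : Real.exp (-2 * Real.log (ρ / r)) = (r / ρ) ^ 2 := by
      rw [neg_mul, Real.exp_neg, mul_comm, Real.exp_mul, Real.exp_log (by positivity)]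
      norm_num
      rw [← inv_pow, inv_div]
    rw [Real.exp_add, Real.exp_add, h.U0, e1] at h7
    simp only [zero_add]
    refine le_trans (le_of_eq ?_) (mul_le_mul_of_nonneg_left h7 hρ0.le)
    field_simp
  have hp := polar_ball (fun y => Real.exp (U y)) (by have := cU.measurable; fun_prop) 0 (R0 * r) (by positivity) (cont_int _ (by fun_prop) _)
  have hle : ∫ y in ball (0:E2) (R0 * r), Real.exp (U y) ≤ C0 :=
    (setIntegral_mono_set (cont_int _ (by fun_prop) _) (Eventually.of_forall fun y => (Real.exp_pos _).le) (ball_subset_ball hR).eventuallyLE).trans h.ms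
  rw [hp.2] at hle
  have i1 : IntervalIntegrable (fun t => t * ∫ θ in (-Real.pi)..Real.pi, Real.exp (U (0 + t • ee θ))) volume 0 r :=
    hp.1.mono_set (by rw [Set.uIcc_of_le hr.le, Set.uIcc_of_le (by positivity)]; exact Set.Icc_subset_Icc le_rfl hrR)
  have i2 : IntervalIntegrable (fun t => t * ∫ θ in (-Real.pi)..Real.pi, Real.exp (U (0 + t • ee θ))) volume r (R0 * r) :=
    hp.1.mono_set (by rw [Set.uIcc_of_le hrR, Set.uIcc_of_le (by positivity)]; exact Set.Icc_subset_Icc hr.le le_rfl)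
  rw [← intervalIntegral.integral_add_adjacent_intervals i1 i2] at hle
  have n1 : 0 ≤ ∫ t in (0:ℝ)..r, t * ∫ θ in (-Real.pi)..Real.pi, Real.exp (U (0 + t • ee θ)) := by
    refine intervalIntegral.integral_nonneg hr.le fun t ht => mul_nonneg ht.1 ?_
    exact intervalIntegral.integral_nonneg (by linarith) fun θ _ => (Real.exp_pos _).le
  have n2 : ∫ t in r..(R0 * r), 2 * Real.pi * Real.exp (-1 - b) * t⁻¹ ≤ ∫ t in r..(R0 * r), t * ∫ θ in (-Real.pi)..Real.pi, Real.exp (U (0 + t • ee θ)) := by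
    refine intervalIntegral.integral_mono_on hrR ?_ i2 hc
    refine (intervalIntegral.intervalIntegrable_inv (fun t ht => ?_) continuousOn_id).const_mul _
    rw [Set.uIcc_of_le hrR] at ht
    simp only [id]; linarith [ht.1]
  rw [intervalIntegral.integral_const_mul, integral_inv_of_pos hr (by positivity), mul_div_cancel_right₀ _ hr.ne'] at n2
  linarith
end

lemma pass1 (b C0 C1 ζ : ℝ) (hb : 0 ≤ b) (hζ : 0 < ζ) : ∃ R2 ≥ (1:ℝ), ∃ η > 0, η ≤ 1 ∧ ∀ (U : E2 → ℝ) (R r : ℝ), Core U b C0 C1 R r →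
    R2 * r ≤ R → mm U R ≤ 8 * Real.pi + η → mm U R - mm U (R2 * r) ≤ ζ := by
  have hpi := Real.pi_pos
  obtain ⟨L, hL1, hL2⟩ : ∃ L : ℝ, 1 ≤ L ∧ C0 < 2 * Real.pi * Real.exp (-1 - b) * L := by
    refine ⟨max 1 (C0 / (2 * Real.pi * Real.exp (-1 - b)) + 1), le_max_left _ _, ?_⟩
    have h0 : 0 < 2 * Real.pi * Real.exp (-1 - b) := by positivity
    have h1 : C0 / (2 * Real.pi * Real.exp (-1 - b)) < max 1 (C0 / (2 * Real.pi * Real.exp (-1 - b)) + 1) :=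
      lt_of_lt_of_le (by linarith) (le_max_right _ _)
    rwa [div_lt_iff₀' h0] at h1
  set R0 := Real.exp L with hR0
  set κ := 1 / L with hκ
  have hκ0 : 0 < κ := by positivity
  have hκ1 : κ ≤ 1 := by rw [hκ, div_le_one (by linarith)]; exact hL1
  have hR01 : 1 < R0 := by rw [hR0]; exact Real.one_lt_exp_iff.2 (by linarith)
  set D := b * (Real.exp (C1 + Real.log 2 * 9) * (2 * R0) ^ (2 + κ) * (2 * KC (2 - κ / 2) (2 + κ - 0))) with hD
  have hK := KC_pos (2 - κ / 2) (2 + κ - 0) (by linarith) (by linarith)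
  have hD0 : 0 ≤ D := by positivity
  have ht : Tendsto (fun x : ℝ => D * x ^ (-κ)) atTop (nhds (D * 0)) := (tendsto_rpow_neg_atTop hκ0).const_mul D
  rw [mul_zero] at ht
  obtain ⟨R2, hR2a, hR2b⟩ := ((ht.eventually_le_const hζ).and (eventually_ge_atTop (2 * R0))).exists
  refine ⟨R2, by linarith, min 1 (Real.pi * κ), by positivity, min_le_left _ _, ?_⟩
  intro U R r h hRr hmR
  have hr := h.hr
  have hR0r : R0 * r ≤ R := by nlinarith
  have hmlow : 2 * Real.pi * (2 + κ) ≤ mm U (R0 * r) := by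
    by_contra hcon
    have := h.mass_dichotomy R0 hR01 hR0r (by
      rw [hR0, Real.log_exp]
      have : 2 * Real.pi * (2 + κ) = 4 * Real.pi + 2 * Real.pi / L := by rw [hκ]; ring
      linarith)
    rw [hR0, Real.log_exp] at this
    linarith
  have hη1 := min_le_left 1 (Real.pi * κ)
  have hη2 := min_le_right 1 (Real.pi * κ)
  have ht := h.tail (2 + κ) (2 - κ / 2) 0 (R0 * r) (R2 * r) (by linarith) (by linarith) (by positivity) hR0r hmlow
    (by linarith) (by nlinarith) (by linarith)
  simp only [Real.rpow_zero, one_mul] at ht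
  set S := ball (0:E2) R \ ball 0 (R2 * r) with hS
  have hSm : MeasurableSet S := measurableSet_ball.diff measurableSet_ball
  have cU := h.hU.continuous
  have ie : IntegrableOn (fun x => Real.exp (U x)) S := (cont_int _ (by fun_prop) R).mono_set Set.sdiff_subset
  rw [← ofReal_integral_eq_lintegral_ofReal ie (Eventually.of_forall fun y => (Real.exp_pos _).le)] at ht
  have hpos : 0 ≤ (r ^ 2)⁻¹ * Real.exp (C1 + Real.log 2 * mm U R / (2 * Real.pi)) * (2 * (R0 * r)) ^ (2 + κ) *
        (2 * KC (2 - κ / 2) (2 + κ - 0) * (R2 * r) ^ (2 - (2 + κ - 0))) := by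
    have : 0 < R2 := by linarith
    positivity
  rw [ENNReal.ofReal_le_ofReal_iff hpos] at ht
  have hdiff : mm U R - mm U (R2 * r) = ∫ y in S, -lapl U y := by
    have h3 := setIntegral_union (f := fun y => -lapl U y) (μ := volume) (Set.disjoint_sdiff_right (s := ball (0:E2) (R2 * r)) (t := ball (0:E2) R)) hSm (h.fi _) ((h.fi R).mono_set Set.sdiff_subset)
    rw [Set.union_sdiff_cancel (ball_subset_ball hRr)] at h3
    unfold mm; linarith
  rw [hdiff]
  have h4 : ∫ y in S, -lapl U y ≤ b * ∫ y in S, Real.exp (U y) := by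
    rw [← integral_const_mul]
    exact setIntegral_mono_on ((h.fi R).mono_set Set.sdiff_subset) (ie.const_mul _) hSm fun y hy => h.fb y hy.1
  have h5 : Real.exp (C1 + Real.log 2 * mm U R / (2 * Real.pi)) ≤ Real.exp (C1 + Real.log 2 * 9) := by
    rw [Real.exp_le_exp]
    have h2 : 0 < Real.log 2 := Real.log_pos (by norm_num)
    have h3 : mm U R / (2 * Real.pi) ≤ 9 := by
      rw [div_le_iff₀ (by positivity)]; nlinarith [Real.pi_gt_three]
    rw [mul_div_assoc]
    nlinarith
  have h6 : (r ^ 2)⁻¹ * (2 * (R0 * r)) ^ (2 + κ) * (R2 * r) ^ (2 - (2 + κ - 0)) = (2 * R0) ^ (2 + κ) * R2 ^ (-κ) := by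
    have hR2p : 0 < R2 := by linarith
    rw [show 2 * (R0 * r) = (2 * R0) * r by ring, Real.mul_rpow (by positivity) hr.le, Real.mul_rpow hR2p.le hr.le,
      show 2 - (2 + κ - 0) = -κ by ring, Real.rpow_add hr, Real.rpow_two]
    have : r ^ κ * r ^ (-κ) = 1 := by rw [← Real.rpow_add hr]; simp
    calc _ = (2 * R0) ^ (2 + κ) * R2 ^ (-κ) * ((r ^ 2)⁻¹ * r ^ 2) * (r ^ κ * r ^ (-κ)) := by ring
      _ = _ := by rw [this, inv_mul_cancel₀ (by positivity)]; ring
  calc ∫ y in S, -lapl U y ≤ b * ∫ y in S, Real.exp (U y) := h4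
    _ ≤ b * ((r ^ 2)⁻¹ * Real.exp (C1 + Real.log 2 * mm U R / (2 * Real.pi)) * (2 * (R0 * r)) ^ (2 + κ) *
        (2 * KC (2 - κ / 2) (2 + κ - 0) * (R2 * r) ^ (2 - (2 + κ - 0)))) := by gcongr
    _ = b * (Real.exp (C1 + Real.log 2 * mm U R / (2 * Real.pi)) * (2 * KC (2 - κ / 2) (2 + κ - 0)) * ((r ^ 2)⁻¹ * (2 * (R0 * r)) ^ (2 + κ) * (R2 * r) ^ (2 - (2 + κ - 0)))) := by ring
    _ = b * (Real.exp (C1 + Real.log 2 * mm U R / (2 * Real.pi)) * (2 * KC (2 - κ / 2) (2 + κ - 0)) * ((2 * R0) ^ (2 + κ) * R2 ^ (-κ))) := by rw [h6]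
    _ ≤ b * (Real.exp (C1 + Real.log 2 * 9) * (2 * KC (2 - κ / 2) (2 + κ - 0)) * ((2 * R0) ^ (2 + κ) * R2 ^ (-κ))) := by
        have : 0 < R2 := by linarith
        gcongr
    _ = D * R2 ^ (-κ) := by rw [hD]; ring
    _ ≤ ζ := hR2a

lemma vol_ball (ρ : ℝ) (hρ : 0 ≤ ρ) : volume.real (ball (0:E2) ρ) = Real.pi * ρ ^ 2 := by
  rw [Measure.real, EuclideanSpace.volume_ball_fin_two]
  simp [ENNReal.toReal_mul, ENNReal.toReal_pow, ENNReal.toReal_ofReal hρ, ENNReal.toReal_ofReal Real.pi_pos.le]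
  ring

lemma Core.rlow {U : E2 → ℝ} {b C0 C1 R r : ℝ} (h : Core U b C0 C1 R r) (R2 a0 : ℝ) (hR2 : 1 ≤ R2)
    (hRr : R2 * r ≤ R) (hm : 2 * Real.pi * a0 ≤ mm U (R2 * r)) : (R / (R2 * r)) ^ a0 ≤ (r ^ 2)⁻¹ := by
  have hr := h.hr
  have hR := h.hR
  have hpi := Real.pi_pos
  have hRp : 0 < R2 * r := by positivity
  have hlog : 0 ≤ Real.log (R / (R2 * r)) := Real.log_nonneg ((one_le_div hRp).2 hRr)
  have hne : ∀ᵐ y : E2, y ∉ ({0} : Set E2) := measure_eq_zero_iff_ae_notMem.1 (by simp)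
  have hsub : ball (0:E2) (R2 * r) ⊆ ball 0 R := ball_subset_ball hRr
  have ik := kk_int R hR 0 0 R _ h.cf
  have h1 : ∫ y in ball (0:E2) (R2 * r), kk R (0 - y) * (-lapl U y) ≤ ∫ y in ball (0:E2) R, kk R (0 - y) * (-lapl U y) := by
    refine setIntegral_mono_set ik ?_ hsub.eventuallyLE
    filter_upwards [ae_restrict_mem measurableSet_ball, ae_restrict_of_ae hne] with y hy hyn
    have hy0 : 0 < ‖y‖ := norm_pos_iff.2 hyn
    refine mul_nonneg ?_ (h.f0 y hy)
    rw [kk, zero_sub, norm_neg, sub_nonneg]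
    exact Real.log_le_log hy0 (mem_ball_zero_iff.1 hy).le
  have h2 : ∫ y in ball (0:E2) (R2 * r), Real.log (R / (R2 * r)) * (-lapl U y) ≤ ∫ y in ball (0:E2) (R2 * r), kk R (0 - y) * (-lapl U y) := by
    refine integral_mono_ae ((h.fi _).const_mul _) (ik.mono_set hsub) ?_
    filter_upwards [ae_restrict_mem measurableSet_ball, ae_restrict_of_ae hne] with y hy hyn
    have hy0 : 0 < ‖y‖ := norm_pos_iff.2 hyn
    refine mul_le_mul_of_nonneg_right ?_ (h.f0 y (hsub hy))
    rw [kk, zero_sub, norm_neg, Real.log_div hR.ne' hRp.ne']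
    have : Real.log ‖y‖ ≤ Real.log (R2 * r) := Real.log_le_log hy0 (mem_ball_zero_iff.1 hy).le
    linarith
  rw [integral_const_mul] at h2
  have h3 := h.low
  have h4 : Real.log (R / (R2 * r)) * (2 * Real.pi * a0) ≤ 2 * Real.pi * U 0 := by
    have : Real.log (R / (R2 * r)) * (2 * Real.pi * a0) ≤ Real.log (R / (R2 * r)) * mm U (R2 * r) := by gcongr
    unfold mm at this
    linarith
  rw [← h.U0, Real.rpow_def_of_pos (by positivity), Real.exp_le_exp]
  nlinarith

lemma pass2 (b C0 C1 s : ℝ) (hb : 0 ≤ b) (hs : 1/2 < s) (hs' : s ≤ 3/4) : ∃ R2 ≥ (1:ℝ), ∃ η > 0, ∃ D ≥ 0, ∃ γ > (0:ℝ),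
    ∀ (U : E2 → ℝ) (R r : ℝ), Core U b C0 C1 R r →
    2 * R2 * r ≤ R → |mm U R - 8 * Real.pi| ≤ η → 
    ∫ x in ball (0:E2) R, ‖x‖ ^ (2 * s) * Real.exp (U x) ≤ D * r ^ (2 * s) ∧ R * r ^ (s - 1) ≤ D * R ^ γ := by
  have hpi := Real.pi_pos
  set ζ := s - 1/2 with hζ
  have hζ0 : 0 < ζ := by linarith
  obtain ⟨R2, hR2, η0, hη0, hη01, H⟩ := pass1 b C0 C1 (Real.pi * ζ) hb (by positivity)
  set q := (1 - s) * (4 - ζ) / (2 - ζ) with hq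
  have hq1 : q < 1 := by
    rw [hq, div_lt_one (by linarith)]
    nlinarith
  have hR2p : 0 < R2 := by linarith
  set a := 4 - ζ - 2 * s with haa
  have ha : 2 < a := by linarith
  have hK := KC_pos 1 a (by norm_num) ha
  set D1 := (2 * R2) ^ (2 + 2 * s) * (Real.pi + Real.exp (C1 + Real.log 2 * 9) * (2 * KC 1 a)) with hD1
  have hD1p : 0 ≤ D1 := by positivity
  refine ⟨R2, hR2, min η0 (Real.pi * ζ), by positivity, D1 + R2 ^ q, by positivity, 1 - q, by linarith, ?_⟩
  intro U R r h hRr hmR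
  have hr := h.hr
  have hR := h.hR
  have hm1 := abs_le.1 hmR
  have hη1 := min_le_left η0 (Real.pi * ζ)
  have hη2 := min_le_right η0 (Real.pi * ζ)
  have hRr' : R2 * r ≤ R := by nlinarith [mul_pos hR2p hr]
  have hp1 := H U R r h hRr' (by linarith)
  have hm2 : 2 * Real.pi * (4 - ζ) ≤ mm U (R2 * r) := by linarith
  have hzp : Real.pi * ζ ≤ Real.pi * 1 := by gcongr; linarith
  constructor
  · have ht := h.tail (4 - ζ) 1 (2 * s) (R2 * r) (2 * (R2 * r)) (by norm_num) (by norm_num) (by positivity) hRr' hm2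
      (by linarith) le_rfl ha
    have cU := h.hU.continuous
    have cg : Continuous fun x : E2 => ‖x‖ ^ (2 * s) * Real.exp (U x) :=
      (continuous_norm.rpow_const (fun x => Or.inr (by linarith))).mul (by fun_prop)
    set S := ball (0:E2) R \ ball 0 (2 * (R2 * r)) with hS
    have hSm : MeasurableSet S := measurableSet_ball.diff measurableSet_ball
    have ie : IntegrableOn (fun x => ‖x‖ ^ (2 * s) * Real.exp (U x)) S := (cont_int _ cg R).mono_set Set.sdiff_subset
    rw [← ofReal_integral_eq_lintegral_ofReal ie (Eventually.of_forall fun y => by positivity)] at ht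
    rw [ENNReal.ofReal_le_ofReal_iff (by positivity)] at ht
    have hsub : ball (0:E2) (2 * (R2 * r)) ⊆ ball 0 R := ball_subset_ball (by linarith)
    have h3 := setIntegral_union (f := fun x => ‖x‖ ^ (2 * s) * Real.exp (U x)) (μ := volume) (Set.disjoint_sdiff_right (s := ball (0:E2) (2 * (R2 * r))) (t := ball (0:E2) R)) hSm (cont_int _ cg _) ie
    rw [Set.union_sdiff_cancel hsub] at h3
    have h4 : ∫ x in ball (0:E2) (2 * (R2 * r)), ‖x‖ ^ (2 * s) * Real.exp (U x) ≤ ∫ x in ball (0:E2) (2 * (R2 * r)), (2 * (R2 * r)) ^ (2 * s) * (r ^ 2)⁻¹ := by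
      refine setIntegral_mono_on (cont_int _ cg _) (cont_int _ continuous_const _) measurableSet_ball fun x hx => ?_
      have h5 : Real.exp (U x) ≤ (r ^ 2)⁻¹ := by rw [← h.U0]; exact Real.exp_le_exp.2 (h.mx x (hsub hx))
      have h6 : ‖x‖ ≤ 2 * (R2 * r) := (mem_ball_zero_iff.1 hx).le
      have : 0 ≤ 2 * s := by linarith
      gcongr
    rw [setIntegral_const, vol_ball _ (by positivity), smul_eq_mul] at h4
    have h5 : Real.exp (C1 + Real.log 2 * mm U R / (2 * Real.pi)) ≤ Real.exp (C1 + Real.log 2 * 9) := by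
      rw [Real.exp_le_exp]
      have h2 : 0 < Real.log 2 := Real.log_pos (by norm_num)
      have h3 : mm U R / (2 * Real.pi) ≤ 9 := by
        rw [div_le_iff₀ (by positivity)]; nlinarith [Real.pi_gt_three]
      rw [mul_div_assoc]
      nlinarith
    have e0 : (r ^ 2)⁻¹ * (2 * (R2 * r)) ^ (2 + 2 * s) = (2 * R2) ^ (2 + 2 * s) * r ^ (2 * s) := by
      rw [show 2 * (R2 * r) = (2 * R2) * r by ring, Real.mul_rpow (by positivity) hr.le, Real.rpow_add hr, Real.rpow_two]
      field_simp
    have e1 : Real.pi * (2 * (R2 * r)) ^ 2 * ((2 * (R2 * r)) ^ (2 * s) * (r ^ 2)⁻¹) = Real.pi * ((r ^ 2)⁻¹ * (2 * (R2 * r)) ^ (2 + 2 * s)) := by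
      rw [Real.rpow_add (by positivity), Real.rpow_two]; ring
    have e2 : (r ^ 2)⁻¹ * Real.exp (C1 + Real.log 2 * mm U R / (2 * Real.pi)) * (2 * (R2 * r)) ^ (4 - ζ) * (2 * KC 1 (4 - ζ - 2 * s) * (2 * (R2 * r)) ^ (2 - (4 - ζ - 2 * s)))
       = Real.exp (C1 + Real.log 2 * mm U R / (2 * Real.pi)) * (2 * KC 1 a) * ((r ^ 2)⁻¹ * (2 * (R2 * r)) ^ (2 + 2 * s)) := by
      rw [show 2 + 2 * s = (4 - ζ) + (2 - (4 - ζ - 2 * s)) by ring, Real.rpow_add (by positivity) (4 - ζ)]; ring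
    rw [e1, e0] at h4
    rw [e2, e0] at ht
    have h7 : Real.exp (C1 + Real.log 2 * mm U R / (2 * Real.pi)) * (2 * KC 1 a) * ((2 * R2) ^ (2 + 2 * s) * r ^ (2 * s)) ≤ Real.exp (C1 + Real.log 2 * 9) * (2 * KC 1 a) * ((2 * R2) ^ (2 + 2 * s) * r ^ (2 * s)) := by gcongr
    have h8 : 0 ≤ R2 ^ q * r ^ (2 * s) := by positivity
    calc _ ≤ D1 * r ^ (2 * s) := by rw [h3, hD1]; linarith
      _ ≤ _ := by rw [add_mul]; linarith
  · have h1 := h.rlow R2 (4 - ζ) hR2 hRr' hm2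
    have h2 : R ^ (4 - ζ) ≤ R2 ^ (4 - ζ) * r ^ (2 - ζ) := by
      rw [Real.div_rpow hR.le (by positivity), div_le_iff₀ (by positivity), Real.mul_rpow hR2p.le hr.le,
        show (4 - ζ) = 2 + (2 - ζ) by ring, Real.rpow_add hr, Real.rpow_two] at h1
      rw [show (4 - ζ) = 2 + (2 - ζ) by ring]
      refine h1.trans (le_of_eq ?_)
      field_simp
    have ht : 0 ≤ (1 - s) / (2 - ζ) := div_nonneg (by linarith) (by linarith)
    have h3 := Real.rpow_le_rpow (by positivity) h2 ht
    rw [Real.mul_rpow (by positivity) (by positivity), ← Real.rpow_mul hR.le, ← Real.rpow_mul hR2p.le, ← Real.rpow_mul hr.le,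
      show (4 - ζ) * ((1 - s) / (2 - ζ)) = q by rw [hq]; ring, show (2 - ζ) * ((1 - s) / (2 - ζ)) = 1 - s by
        have : 2 - ζ ≠ 0 := by linarith
        field_simp] at h3
    have e : r ^ (s - 1) * r ^ (1 - s) = 1 := by rw [← Real.rpow_add hr]; simp
    have h4 : R ^ q * r ^ (s - 1) ≤ R2 ^ q := by
      calc R ^ q * r ^ (s - 1) ≤ R2 ^ q * r ^ (1 - s) * r ^ (s - 1) := by gcongr
        _ = R2 ^ q * (r ^ (s - 1) * r ^ (1 - s)) := by ring
        _ = _ := by rw [e, mul_one]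
    have e5 : R = R ^ (1 - q) * R ^ q := by rw [← Real.rpow_add hR]; simp
    calc R * r ^ (s - 1) = R ^ (1 - q) * (R ^ q * r ^ (s - 1)) := by rw [← mul_assoc, ← e5]
      _ ≤ R ^ (1 - q) * R2 ^ q := by gcongr
      _ ≤ _ := by
        have : 0 ≤ D1 * R ^ (1 - q) := by positivity
        rw [add_mul]; linarith

lemma int_pd_zero (g : E2 → ℝ) (hg : ContDiff ℝ 1 g) (hc : HasCompactSupport g) (j : Fin 2) :
    ∫ x, pd j g x = 0 := by
  have d := hg.differentiable (by norm_num)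
  have c1 := hg.continuous_fderiv (by norm_num)
  have cp : Continuous (fun x => fderiv ℝ g x (EuclideanSpace.single j 1)) := by fun_prop
  have hcs : HasCompactSupport (fun x => fderiv ℝ g x (EuclideanSpace.single j 1)) := hc.fderiv_apply (𝕜 := ℝ) _
  have := integral_mul_fderiv_eq_neg_fderiv_mul_of_integrable (μ := (volume : Measure E2)) (f := fun _ : E2 => (1:ℝ)) (g := g) (v := EuclideanSpace.single j 1)
    (by simp) (by simpa using cp.integrable_of_hasCompactSupport hcs) (by simpa using hg.continuous.integrable_of_hasCompactSupport hc)
    (by simp) (fun x _ => d x)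
  simpa [pd] using this

lemma cacc (U χ : E2 → ℝ) (hU : ContDiff ℝ 2 U) (hχ : ContDiff ℝ 1 χ) (hc : HasCompactSupport χ) :
    ∫ x, (χ x ^ 2 * (pd 0 U x ^ 2 + pd 1 U x ^ 2) * Real.exp (U x)) ≤
     2 * (∫ x, χ x ^ 2 * (-lapl U x) * Real.exp (U x)) + 4 * ∫ x, (pd 0 χ x ^ 2 + pd 1 χ x ^ 2) * Real.exp (U x) := by
  have cU := hU.continuous
  have cχ := hχ.continuous
  have dU : Differentiable ℝ U := hU.differentiable (by norm_num)
  have dχ : Differentiable ℝ χ := hχ.differentiable (by norm_num)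
  have hU1 : ContDiff ℝ 1 (fderiv ℝ U) := hU.fderiv_right (by norm_num)
  have hp : ∀ j, ContDiff ℝ 1 (pd j U) := fun j => hU1.clm_apply contDiff_const
  have hU' : ContDiff ℝ 1 U := hU.of_le (by norm_num)
  have cpχ : ∀ j, Continuous (pd j χ) := fun j => (hχ.continuous_fderiv (by norm_num)).clm_apply continuous_const
  have cpU : ∀ j, Continuous (pd j U) := fun j => (hp j).continuous
  have cppU : ∀ j, Continuous (pd j (pd j U)) := fun j => ((hp j).continuous_fderiv (by norm_num)).clm_apply continuous_const
  have cl := continuous_lapl U hU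
  set g : Fin 2 → E2 → ℝ := fun j x => χ x ^ 2 * Real.exp (U x) * pd j U x with hgdef
  have hg : ∀ j, ContDiff ℝ 1 (g j) := fun j => ((hχ.pow 2).mul hU'.exp).mul (hp j)
  have hgc : ∀ j, HasCompactSupport (g j) := fun j => by
    have : g j = fun x => χ x * (χ x * Real.exp (U x) * pd j U x) := by ext x; simp only [hgdef]; ring
    rw [this]; exact hc.mul_right
  have hpd : ∀ j x, pd j (g j) x = 2 * χ x * pd j χ x * Real.exp (U x) * pd j U x + χ x ^ 2 * Real.exp (U x) * pd j U x ^ 2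
      + χ x ^ 2 * Real.exp (U x) * pd j (pd j U) x := by
    intro j x
    have h1 := (((dχ x).hasFDerivAt.pow 2).mul (dU x).hasFDerivAt.exp).mul (((hp j).differentiable (by norm_num)) x).hasFDerivAt
    unfold pd at h1 ⊢
    have h2 := h1.fderiv
    have h3 : g j = (fun x => χ x ^ 2) * (fun x => Real.exp (U x)) * (fun x => fderiv ℝ U x (EuclideanSpace.single j 1)) := by
      ext x; simp [hgdef, pd]
    rw [h3]
    erw [h2]
    simp
    ring
  have hpc : ∀ j, Continuous (pd j (g j)) := fun j => ((hg j).continuous_fderiv (by norm_num)).clm_apply continuous_const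
  have hpcs : ∀ j, HasCompactSupport (pd j (g j)) := fun j => (hgc j).fderiv_apply (𝕜 := ℝ) _
  have hi : ∀ j, Integrable (pd j (g j)) := fun j => (hpc j).integrable_of_hasCompactSupport (hpcs j)
  have hz := int_pd_zero (g 0) (hg 0) (hgc 0) 0
  have hz1 := int_pd_zero (g 1) (hg 1) (hgc 1) 1
  have hχpc : ∀ j, HasCompactSupport (pd j χ) := fun j => hc.fderiv_apply (𝕜 := ℝ) _
  have i1 : Integrable fun x => (χ x ^ 2 * (pd 0 U x ^ 2 + pd 1 U x ^ 2) * Real.exp (U x)) := by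
    have := cpU 0; have := cpU 1
    refine Continuous.integrable_of_hasCompactSupport (by fun_prop) ?_
    have : (fun x => (χ x ^ 2 * (pd 0 U x ^ 2 + pd 1 U x ^ 2) * Real.exp (U x))) = fun x => χ x * (χ x * (pd 0 U x ^ 2 + pd 1 U x ^ 2) * Real.exp (U x)) := by ext x; ring
    rw [this]; exact hc.mul_right
  have i2 : Integrable fun x => χ x ^ 2 * (-lapl U x) * Real.exp (U x) := by
    refine Continuous.integrable_of_hasCompactSupport (by fun_prop) ?_
    have : (fun x => χ x ^ 2 * (-lapl U x) * Real.exp (U x)) = fun x => χ x * (χ x * (-lapl U x) * Real.exp (U x)) := by ext x; ring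
    rw [this]; exact hc.mul_right
  have i3' : ∀ j, Integrable fun x => pd j χ x ^ 2 * Real.exp (U x) := by
    intro j
    have := cpχ j
    refine Continuous.integrable_of_hasCompactSupport (by fun_prop) ?_
    have : (fun x => pd j χ x ^ 2 * Real.exp (U x)) = fun x => pd j χ x * (pd j χ x * Real.exp (U x)) := by ext x; ring
    rw [this]; exact (hχpc j).mul_right
  have i3 : Integrable fun x => (pd 0 χ x ^ 2 + pd 1 χ x ^ 2) * Real.exp (U x) := by
    refine ((i3' 0).add (i3' 1)).congr (Eventually.of_forall fun x => ?_)
    simp only [Pi.add_apply]; ring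
  have key : ∫ x, ((1/2) * (χ x ^ 2 * (pd 0 U x ^ 2 + pd 1 U x ^ 2) * Real.exp (U x)) - (χ x ^ 2 * (-lapl U x) * Real.exp (U x)
      + 2 * ((pd 0 χ x ^ 2 + pd 1 χ x ^ 2) * Real.exp (U x)))) ≤ ∫ x, (pd 0 (g 0) x + pd 1 (g 1) x) := by
    refine integral_mono ((i1.const_mul _).sub (i2.add (i3.const_mul _))) ((hi 0).add (hi 1)) fun x => ?_
    have hpt : ∀ j, (1/2) * (χ x ^ 2 * pd j U x ^ 2 * Real.exp (U x)) - 2 * (pd j χ x ^ 2 * Real.exp (U x)) + χ x ^ 2 * Real.exp (U x) * pd j (pd j U) x ≤ pd j (g j) x := by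
      intro j
      rw [hpd]
      have := mul_nonneg (sq_nonneg (χ x * pd j U x + 2 * pd j χ x)) (Real.exp_pos (U x)).le
      nlinarith
    have h0 := hpt 0
    have h1 := hpt 1
    simp only [lapl]
    linarith
  have i23 : Integrable (fun x => χ x^2*(-lapl U x)*Real.exp (U x) + 2*((pd 0 χ x^2+pd 1 χ x^2)*Real.exp (U x))) := i2.add (i3.const_mul 2)
  rw [integral_add (hi 0) (hi 1), hz, hz1, integral_sub (i1.const_mul _) i23, integral_const_mul] at key
  have e : ∫ x, (χ x ^ 2 * (-lapl U x) * Real.exp (U x) + 2 * ((pd 0 χ x ^ 2 + pd 1 χ x ^ 2) * Real.exp (U x))) = 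
     (∫ x, χ x ^ 2 * (-lapl U x) * Real.exp (U x)) + 2 * ∫ x, (pd 0 χ x ^ 2 + pd 1 χ x ^ 2) * Real.exp (U x) := by
    rw [integral_add i2 (i3.const_mul _), integral_const_mul]
  rw [e] at key
  linarith

lemma toE2_norm (s t : ℝ) : ‖toE2 (s, t)‖ = √(s ^ 2 + t ^ 2) := by
  rw [EuclideanSpace.norm_eq, toE2_apply]
  simp

lemma horiz (W : E2 → ℝ) (hW : ContDiff ℝ 1 W) (ρ S : ℝ) (hρ : 0 < ρ) (h0 : ∀ x ∈ sphere (0:E2) ρ, 0 ≤ W x)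
    (hS : ∀ x ∈ sphere (0:E2) ρ, W x ≤ S) : |∫ x in ball (0:E2) ρ, pd 0 W x| ≤ 2 * ρ * S := by
  have cp : Continuous (pd 0 W) := (hW.continuous_fderiv (by norm_num)).clm_apply continuous_const
  have dW : Differentiable ℝ W := hW.differentiable (by norm_num)
  have hS0 : 0 ≤ S := by
    have hm : ρ • ee 0 ∈ sphere (0:E2) ρ := by simp [norm_smul, norm_ee, abs_of_pos hρ]
    exact (h0 _ hm).trans (hS _ hm)
  have hI : Integrable ((ball (0:E2) ρ).indicator (pd 0 W)) := (integrable_indicator_iff measurableSet_ball).2 (cont_int _ cp ρ)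
  rw [← integral_indicator measurableSet_ball, ← toE2_mp.integral_comp toE2.measurableEmbedding]
  have hI2 : Integrable (fun p => (ball (0:E2) ρ).indicator (pd 0 W) (toE2 p)) (volume : Measure (ℝ × ℝ)) :=
    (toE2_mp.integrable_comp_emb toE2.measurableEmbedding).2 hI
  rw [Measure.volume_eq_prod] at hI2 ⊢
  rw [integral_prod_symm _ hI2]
  have hin : ∀ t, ‖∫ s, (ball (0:E2) ρ).indicator (pd 0 W) (toE2 (s, t))‖ ≤ (Set.Ioo (-ρ) ρ).indicator (fun _ => S) t := by
    intro t
    by_cases ht : t ∈ Set.Ioo (-ρ) ρ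
    · rw [Set.indicator_of_mem ht]
      have ht2 : t ^ 2 < ρ ^ 2 := sq_lt_sq' ht.1 ht.2
      set a := √(ρ ^ 2 - t ^ 2) with ha
      have ha0 : 0 ≤ a := Real.sqrt_nonneg _
      have ha2 : a ^ 2 = ρ ^ 2 - t ^ 2 := Real.sq_sqrt (by linarith)
      have e : ∀ s, (ball (0:E2) ρ).indicator (pd 0 W) (toE2 (s, t)) = (Set.Ioo (-a) a).indicator (fun s => pd 0 W (toE2 (s, t))) s := by
        intro s
        have : toE2 (s, t) ∈ ball (0:E2) ρ ↔ s ∈ Set.Ioo (-a) a := by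
          rw [mem_ball_zero_iff, toE2_norm, Real.sqrt_lt' hρ, Set.mem_Ioo, ← abs_lt, ← sq_lt_sq₀ (abs_nonneg _) ha0, sq_abs, ha2]
          constructor <;> intro h <;> linarith
        simp only [Set.indicator, this]
      simp_rw [e]
      rw [integral_indicator measurableSet_Ioo, ← integral_Ioc_eq_integral_Ioo, ← intervalIntegral.integral_of_le (by linarith)]
      have ct : Continuous fun s : ℝ => toE2 (s, t) := by simp_rw [toE2_apply]; fun_prop
      rw [intervalIntegral.integral_eq_sub_of_hasDerivAt (f := fun s => W (toE2 (s, t)))]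
      · have hm : ∀ s, s ^ 2 = a ^ 2 → toE2 (s, t) ∈ sphere (0:E2) ρ := by
          intro s hs
          rw [mem_sphere_zero_iff_norm, toE2_norm, hs, ha2, sub_add_cancel, Real.sqrt_sq hρ.le]
        have m1 := hm a rfl
        have m2 := hm (-a) (by ring)
        rw [Real.norm_eq_abs, abs_le]
        have := h0 _ m1; have := h0 _ m2; have := hS _ m1; have := hS _ m2
        constructor <;> linarith
      · intro s _
        have h1 : HasDerivAt (fun s : ℝ => toE2 (s, t)) (EuclideanSpace.single 0 1) s := by
          simp_rw [toE2_apply]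
          simpa using ((hasDerivAt_id s).smul_const (EuclideanSpace.single (0 : Fin 2) (1:ℝ))).add_const (t • EuclideanSpace.single (1 : Fin 2) (1:ℝ))
        exact (dW _).hasFDerivAt.comp_hasDerivAt s h1
      · exact (cp.comp ct).intervalIntegrable _ _
    · rw [Set.indicator_of_notMem ht]
      have : ∀ s, (ball (0:E2) ρ).indicator (pd 0 W) (toE2 (s, t)) = 0 := by
        intro s
        refine Set.indicator_of_notMem ?_ _
        rw [mem_ball_zero_iff, toE2_norm, Real.sqrt_lt' hρ]
        intro h
        apply ht
        rw [Set.mem_Ioo, ← abs_lt, ← sq_lt_sq₀ (abs_nonneg _) hρ.le, sq_abs]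
        nlinarith [sq_nonneg s]
      simp [this]
  have := norm_integral_le_of_norm_le (μ := volume) (f := fun t => ∫ s, (ball (0:E2) ρ).indicator (pd 0 W) (toE2 (s, t)))
    ((integrable_indicator_iff measurableSet_Ioo).2 (integrableOn_const (by simp))) (Eventually.of_forall hin)
  rw [integral_indicator measurableSet_Ioo, setIntegral_const] at this
  refine this.trans (le_of_eq ?_)
  rw [Measure.real, Real.volume_Ioo, ENNReal.toReal_ofReal (by linarith), smul_eq_mul]
  ring

lemma cutoff : ∃ φ : E2 → ℝ, ∃ M ≥ (0:ℝ), ContDiff ℝ 1 φ ∧ HasCompactSupport φ ∧ (∀ x, 0 ≤ φ x) ∧ (∀ x, φ x ≤ 1) ∧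
    (∀ x, ‖x‖ ≤ 1/2 → φ x = 1) ∧ (∀ x, 1 ≤ ‖x‖ → φ x = 0) ∧ (∀ x j, |pd j φ x| ≤ M) ∧ (∀ x j, 1 ≤ ‖x‖ → pd j φ x = 0) := by
  let φ : ContDiffBump (0:E2) := ⟨1/2, 3/4, by norm_num, by norm_num⟩
  have hs : ContDiff ℝ 1 φ := φ.contDiff
  have hc : HasCompactSupport (φ : E2 → ℝ) := φ.hasCompactSupport
  have hcf : HasCompactSupport (fderiv ℝ (φ : E2 → ℝ)) := hc.fderiv (𝕜 := ℝ)
  obtain ⟨M, hM⟩ := hcf.exists_bound_of_continuous (hs.continuous_fderiv (by norm_num))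
  have hts : ∀ x : E2, 1 ≤ ‖x‖ → x ∉ tsupport φ := by
    intro x hx h
    rw [φ.tsupport_eq, mem_closedBall_zero_iff] at h
    have h' : ‖x‖ ≤ 3/4 := h
    linarith
  refine ⟨φ, M, (norm_nonneg _).trans (hM 0), hs, hc, fun x => φ.nonneg, fun x => φ.le_one, ?_, ?_, ?_, ?_⟩
  · intro x hx
    exact φ.one_of_mem_closedBall (by rw [mem_closedBall_zero_iff]; exact hx)
  · intro x hx
    exact image_eq_zero_of_notMem_tsupport (hts x hx)
  · intro x j
    have := (fderiv ℝ (φ : E2 → ℝ) x).le_opNorm (EuclideanSpace.single j 1)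
    simp at this
    exact this.trans (hM x)
  · intro x j hx
    have : fderiv ℝ (φ : E2 → ℝ) x = 0 := by
      by_contra h
      exact hts x hx (support_fderiv_subset ℝ h)
    simp [pd, this]

lemma grad_bd (b C0 C1 : ℝ) : ∃ M ≥ (0:ℝ), ∀ U R r, Core U b C0 C1 R r → r ≤ R →
    ∫ x in ball (0:E2) (R/2), pd 0 U x ^ 2 * Real.exp (U x) ≤ M * (r^2)⁻¹ := by
  obtain ⟨φ, M, hM, hs, hc, h0, h1, hone, hz, hpb, hpz⟩ := cutoff
  refine ⟨2 * |b| * |C0| + 8 * M^2 * |C0|, by positivity, fun U R r H hrR => ?_⟩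
  have hR := H.hR
  have hr := H.hr
  have b0 : 0 ≤ b := H.b0
  set χ : E2 → ℝ := fun x => φ (R⁻¹ • x) with hχd
  have hχ : ContDiff ℝ 1 χ := hs.comp (contDiff_const_smul _)
  have hχc : HasCompactSupport χ := hc.comp_smul (inv_ne_zero hR.ne')
  have hpd : ∀ j x, pd j χ x = R⁻¹ * pd j φ (R⁻¹ • x) := by
    intro j x
    unfold pd
    rw [hχd, fderiv_comp_smul]; simp
  have hn : ∀ x : E2, ‖R⁻¹ • x‖ = ‖x‖ / R := fun x => by
    rw [norm_smul, norm_inv, Real.norm_of_nonneg hR.le]; field_simp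
  have hout : ∀ x : E2, x ∉ ball (0:E2) R → 1 ≤ ‖R⁻¹ • x‖ := by
    intro x hx
    rw [hn, le_div_iff₀ hR]
    simpa using hx
  have C := cacc U χ H.hU hχ hχc
  have cU := H.hU.continuous
  have cp : ∀ j, Continuous (pd j U) := fun j => (H.hU.continuous_fderiv (by norm_num)).clm_apply continuous_const
  have cpχ : ∀ j, Continuous (pd j χ) := fun j => (hχ.continuous_fderiv (by norm_num)).clm_apply continuous_const
  have cl := continuous_lapl U H.hU
  have cχ := hχ.continuous
  have ie : IntegrableOn (fun x => Real.exp (U x)) (ball (0:E2) R) := cont_int _ (by fun_prop) R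
  have hms := H.ms
  have hC0 : 0 ≤ C0 := le_trans (integral_nonneg fun x => (Real.exp_pos _).le) hms
  have cp0 := cp 0
  have cp1 := cp 1
  have e1 : ∫ x in ball (0:E2) (R/2), pd 0 U x ^ 2 * Real.exp (U x) ≤ ∫ x, (χ x ^ 2 * (pd 0 U x ^ 2 + pd 1 U x ^ 2) * Real.exp (U x)) := by
    rw [← integral_indicator measurableSet_ball]
    refine integral_mono ((integrable_indicator_iff measurableSet_ball).2 (cont_int _ (by fun_prop) _)) ?_ fun x => ?_
    · refine Continuous.integrable_of_hasCompactSupport (by fun_prop) ?_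
      have : (fun x => (χ x ^ 2 * (pd 0 U x ^ 2 + pd 1 U x ^ 2) * Real.exp (U x))) = fun x => χ x * (χ x * (pd 0 U x ^ 2 + pd 1 U x ^ 2) * Real.exp (U x)) := by ext x; ring
      rw [this]; exact hχc.mul_right
    · by_cases hx : x ∈ ball (0:E2) (R/2)
      · rw [Set.indicator_of_mem hx]
        have : χ x = 1 := hone _ (by rw [hn, div_le_iff₀ hR]; have := mem_ball_zero_iff.1 hx; linarith)
        simp only [this, one_pow, one_mul]
        have := Real.exp_pos (U x)
        gcongr
        have := sq_nonneg (pd 1 U x); linarith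
      · rw [Set.indicator_of_notMem hx]
        positivity
  have hexp : ∀ x ∈ ball (0:E2) R, Real.exp (U x) ≤ (r^2)⁻¹ := fun x hx => by
    rw [← H.U0]; exact Real.exp_le_exp.2 (H.mx x hx)
  have e2 : ∫ x, χ x ^ 2 * (-lapl U x) * Real.exp (U x) ≤ b * (r^2)⁻¹ * C0 := by
    have : ∫ x, χ x ^ 2 * (-lapl U x) * Real.exp (U x) = ∫ x in ball (0:E2) R, χ x ^ 2 * (-lapl U x) * Real.exp (U x) := by
      rw [setIntegral_eq_integral_of_forall_compl_eq_zero]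
      intro x hx
      have : χ x = 0 := hz _ (hout x hx)
      simp [this]
    rw [this]
    calc _ ≤ ∫ x in ball (0:E2) R, b * (r^2)⁻¹ * Real.exp (U x) := by
          refine setIntegral_mono_on (cont_int _ (by fun_prop) _) (ie.const_mul _) measurableSet_ball fun x hx => ?_
          have f0 := H.f0 x hx
          have fb := H.fb x hx
          have := hexp x hx
          have h2 : χ x ^ 2 ≤ 1 := pow_le_one₀ (h0 _) (h1 _)
          have : χ x ^ 2 * (-lapl U x) ≤ b * (r^2)⁻¹ := by
            calc _ ≤ 1 * (-lapl U x) := by gcongr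
              _ ≤ b * Real.exp (U x) := by linarith
              _ ≤ _ := by gcongr
          have := Real.exp_pos (U x)
          gcongr
      _ = b * (r^2)⁻¹ * ∫ x in ball (0:E2) R, Real.exp (U x) := integral_const_mul _ _
      _ ≤ _ := by gcongr
  have c0 := cpχ 0
  have c1 := cpχ 1
  have e3 : ∫ x, (pd 0 χ x ^ 2 + pd 1 χ x ^ 2) * Real.exp (U x) ≤ 2 * M^2 * (r^2)⁻¹ * C0 := by
    have : ∫ x, (pd 0 χ x ^ 2 + pd 1 χ x ^ 2) * Real.exp (U x) = ∫ x in ball (0:E2) R, (pd 0 χ x ^ 2 + pd 1 χ x ^ 2) * Real.exp (U x) := by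
      rw [setIntegral_eq_integral_of_forall_compl_eq_zero]
      intro x hx
      rw [hpd, hpd, hpz _ 0 (hout x hx), hpz _ 1 (hout x hx)]; simp
    rw [this]
    have hinv : R⁻¹ ≤ r⁻¹ := by gcongr
    have hpp : ∀ j x, pd j χ x ^ 2 ≤ M^2 * (r^2)⁻¹ := by
      intro j x
      have : |pd j χ x| ≤ r⁻¹ * M := by
        rw [hpd, abs_mul, abs_of_pos (inv_pos.2 hR)]
        exact mul_le_mul hinv (hpb _ _) (abs_nonneg _) (inv_pos.2 hr).le
      calc pd j χ x ^ 2 = |pd j χ x| ^ 2 := (sq_abs _).symm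
        _ ≤ (r⁻¹ * M)^2 := by gcongr
        _ = _ := by rw [mul_pow, inv_pow]; ring
    calc _ ≤ ∫ x in ball (0:E2) R, 2 * M^2 * (r^2)⁻¹ * Real.exp (U x) := by
          refine setIntegral_mono_on (cont_int _ (by fun_prop) _) (ie.const_mul _) measurableSet_ball fun x hx => ?_
          have := Real.exp_pos (U x)
          have := hpp 0 x
          have := hpp 1 x
          gcongr
          linarith
      _ = 2 * M^2 * (r^2)⁻¹ * ∫ x in ball (0:E2) R, Real.exp (U x) := integral_const_mul _ _
      _ ≤ _ := by gcongr
  rw [abs_of_nonneg b0, abs_of_nonneg hC0]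
  calc _ ≤ _ := e1
    _ ≤ _ := C
    _ ≤ 2 * (b * (r^2)⁻¹ * C0) + 4 * (2 * M^2 * (r^2)⁻¹ * C0) := by gcongr
    _ = _ := by ring

lemma final_core (U : E2 → ℝ) (b C0 C1 R r A s ρ S V0 : ℝ) (H : Core U b C0 C1 R r) (hA : 0 ≤ A) (hs : 0 < s)
    (hV0 : 0 ≤ V0) (hV1 : V0 ≤ b) (hh : ∀ y ∈ ball (0:E2) R, |-lapl U y - V0 * Real.exp (U y)| ≤ A * ‖y‖^s * Real.exp (U y))
    (hρ : 0 < ρ) (hρR : ρ ≤ R/2) (hS : ∀ y ∈ sphere (0:E2) ρ, Real.exp (U y) ≤ S) :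
    |∫ x in ball (0:E2) ρ, pd 0 U x * (-lapl U x)| ≤ b * (2 * ρ * S) + (A/2) * (r^(1+s) * (∫ x in ball (0:E2) (R/2), pd 0 U x ^ 2 * Real.exp (U x))
      + r^(-(1+s)) * ∫ x in ball (0:E2) R, ‖x‖^(2*s) * Real.exp (U x)) := by
  have hr := H.hr
  have cU := H.hU.continuous
  have cl := continuous_lapl U H.hU
  have cp : Continuous (pd 0 U) := (H.hU.continuous_fderiv (by norm_num)).clm_apply continuous_const
  have hpe : ∀ x, pd 0 (fun x => Real.exp (U x)) x = Real.exp (U x) * pd 0 U x := by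
    intro x
    unfold pd
    rw [((H.hU.differentiable (by norm_num)) x).hasFDerivAt.exp.fderiv]
    simp
  have cn : Continuous (fun x : E2 => ‖x‖^(2*s)) := continuous_norm.rpow_const (fun _ => Or.inr (by linarith))
  have hz := horiz (fun x => Real.exp (U x)) ((H.hU.of_le (by norm_num)).exp) ρ S hρ (fun x _ => (Real.exp_pos _).le) hS
  have split : ∫ x in ball (0:E2) ρ, pd 0 U x * (-lapl U x) = V0 * (∫ x in ball (0:E2) ρ, pd 0 (fun x => Real.exp (U x)) x)
     + ∫ x in ball (0:E2) ρ, pd 0 U x * (-lapl U x - V0 * Real.exp (U x)) := by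
    simp_rw [hpe]
    rw [← integral_const_mul, ← integral_add (cont_int _ (by fun_prop) _) (cont_int _ (by fun_prop) _)]
    congr 1; ext x; ring
  rw [split]
  refine (abs_add_le _ _).trans (add_le_add ?_ ?_)
  · rw [abs_mul, abs_of_nonneg hV0]
    exact mul_le_mul hV1 hz (abs_nonneg _) (hV0.trans hV1)
  · have hp1 : 0 < r^(1+s) := Real.rpow_pos_of_pos hr _
    have hp2 : 0 < r^(-(1+s)) := Real.rpow_pos_of_pos hr _
    have hp12 : r^(1+s) * r^(-(1+s)) = 1 := by rw [← Real.rpow_add hr]; simp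
    have i1 : ∀ t, IntegrableOn (fun x => pd 0 U x ^ 2 * Real.exp (U x)) (ball (0:E2) t) := fun t => cont_int _ (by fun_prop) t
    have i2 : ∀ t, IntegrableOn (fun x => ‖x‖^(2*s) * Real.exp (U x)) (ball (0:E2) t) := fun t => cont_int _ (by fun_prop) t
    have hRp := H.hR
    calc |∫ x in ball (0:E2) ρ, pd 0 U x * (-lapl U x - V0 * Real.exp (U x))|
        ≤ ∫ x in ball (0:E2) ρ, |pd 0 U x * (-lapl U x - V0 * Real.exp (U x))| := abs_integral_le_integral_abs
      _ ≤ ∫ x in ball (0:E2) ρ, (A/2) * (r^(1+s) * (pd 0 U x ^ 2 * Real.exp (U x)) + r^(-(1+s)) * (‖x‖^(2*s) * Real.exp (U x))) := by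
          refine setIntegral_mono_on (cont_int _ (by fun_prop) _) ((((i1 ρ).const_mul _).add ((i2 ρ).const_mul _)).const_mul _) measurableSet_ball fun x hx => ?_
          have hx' : x ∈ ball (0:E2) R := ball_subset_ball (by linarith) hx
          have h := hh x hx'
          have hE := Real.exp_pos (U x)
          rw [abs_mul]
          have e : ‖x‖^(2*s) = (‖x‖^s)^2 := by rw [mul_comm, Real.rpow_mul (norm_nonneg _)]; norm_num
          have am : |pd 0 U x| * ‖x‖^s ≤ (1/2) * (r^(1+s) * pd 0 U x ^2 + r^(-(1+s)) * ‖x‖^(2*s)) := by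
            rw [e, ← sq_abs (pd 0 U x)]
            have hsq := mul_nonneg hp2.le (sq_nonneg (r^(1+s) * |pd 0 U x| - ‖x‖^s))
            have : r^(-(1+s)) * (r^(1+s) * |pd 0 U x| - ‖x‖^s)^2 = (r^(1+s) * r^(-(1+s))) * (r^(1+s) * |pd 0 U x|^2) - 2 * (r^(1+s) * r^(-(1+s))) * (|pd 0 U x| * ‖x‖^s) + r^(-(1+s)) * (‖x‖^s)^2 := by ring
            rw [this, hp12] at hsq
            linarith
          calc |pd 0 U x| * |-lapl U x - V0 * Real.exp (U x)| ≤ |pd 0 U x| * (A * ‖x‖^s * Real.exp (U x)) := by gcongr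
            _ = A * Real.exp (U x) * (|pd 0 U x| * ‖x‖^s) := by ring
            _ ≤ A * Real.exp (U x) * ((1/2) * (r^(1+s) * pd 0 U x ^2 + r^(-(1+s)) * ‖x‖^(2*s))) := by gcongr
            _ = _ := by ring
      _ = (A/2) * (r^(1+s) * (∫ x in ball (0:E2) ρ, pd 0 U x ^ 2 * Real.exp (U x))
      + r^(-(1+s)) * ∫ x in ball (0:E2) ρ, ‖x‖^(2*s) * Real.exp (U x)) := by
          rw [integral_const_mul, integral_add ((i1 ρ).const_mul _) ((i2 ρ).const_mul _), integral_const_mul, integral_const_mul]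
      _ ≤ _ := by
          have m1 := setIntegral_mono_set (i1 (R/2)) (Eventually.of_forall fun x => by positivity) (LE.le.eventuallyLE (ball_subset_ball (x := (0:E2)) hρR))
          have m2 := setIntegral_mono_set (i2 R) (Eventually.of_forall fun x => by positivity) (LE.le.eventuallyLE (ball_subset_ball (x := (0:E2)) (show ρ ≤ R by linarith)))
          gcongr

lemma core_end (b C0 C1 A s : ℝ) (hb : 0 ≤ b) (hA : 0 ≤ A) (hs : 1/2 < s) (hs' : s ≤ 3/4) :
    ∃ R2 ≥ (1:ℝ), ∃ η > 0, ∃ D ≥ 0, ∃ γ > (0:ℝ), ∀ U R r ρ S V0, Core U b C0 C1 R r → 2*R2*r ≤ R → |mm U R - 8*Real.pi| ≤ η →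
      0 ≤ V0 → V0 ≤ b → (∀ y ∈ ball (0:E2) R, |-lapl U y - V0 * Real.exp (U y)| ≤ A * ‖y‖^s * Real.exp (U y)) →
      0 < ρ → ρ ≤ R/2 → (∀ y ∈ sphere (0:E2) ρ, Real.exp (U y) ≤ S) → 0 ≤ S →
      R * |∫ x in ball (0:E2) ρ, pd 0 U x * (-lapl U x)| ≤ b * S * R^2 + D * R^γ := by
  obtain ⟨R2, hR2, η, hη, D, hD, γ, hγ, h⟩ := pass2 b C0 C1 s hb hs hs'
  obtain ⟨M, hM, hg⟩ := grad_bd b C0 C1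
  refine ⟨R2, hR2, η, hη, (A/2) * (M + D) * D, by positivity, γ, hγ, ?_⟩
  intro U R r ρ S V0 H hr2 hmm hV0 hV1 hh hρ hρR hS hS0
  obtain ⟨p1, p2⟩ := h U R r H hr2 hmm
  have hr := H.hr
  have hR := H.hR
  have hrR : r ≤ R := by nlinarith
  have g := hg U R r H hrR
  have F := final_core U b C0 C1 R r A s ρ S V0 H hA (by linarith) hV0 hV1 hh hρ hρR hS
  have t1 : r^(1+s) * (∫ x in ball (0:E2) (R/2), pd 0 U x ^ 2 * Real.exp (U x)) ≤ M * r^(s-1) := by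
    calc _ ≤ r^(1+s) * (M * (r^2)⁻¹) := by gcongr
      _ = M * r^(s-1) := by
        have : (r^2)⁻¹ = r^(-2:ℝ) := by rw [Real.rpow_neg hr.le]; norm_num
        rw [this, mul_left_comm, ← Real.rpow_add hr]; congr 2; ring
  have t2 : r^(-(1+s)) * ∫ x in ball (0:E2) R, ‖x‖^(2*s) * Real.exp (U x) ≤ D * r^(s-1) := by
    calc _ ≤ r^(-(1+s)) * (D * r^(2*s)) := by gcongr
      _ = D * r^(s-1) := by
        rw [mul_left_comm, ← Real.rpow_add hr]; congr 2; ring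
  calc R * |∫ x in ball (0:E2) ρ, pd 0 U x * (-lapl U x)| ≤ R * (b * (2 * (R/2) * S) + (A/2) * (M * r^(s-1) + D * r^(s-1))) := by
        gcongr
        exact F.trans (by gcongr)
    _ = b * S * R^2 + (A/2) * (M+D) * (R * r^(s-1)) := by ring
    _ ≤ b * S * R^2 + (A/2) * (M+D) * (D * R^γ) := by gcongr
    _ = _ := by ring

lemma ext_local (u : E2 → ℝ) (x : E2) (t T : ℝ) (ht : 0 < t) (htT : t < T) (hu : ContDiffOn ℝ 2 u (ball x T)) :
    ∃ W : E2 → ℝ, ContDiff ℝ 2 W ∧ (∀ y, ‖y‖ ≤ t → W y = u (x + y)) ∧ (∀ j y, ‖y‖ ≤ t → pd j W y = pd j u (x + y)) ∧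
      ∀ y, ‖y‖ ≤ t → lapl W y = lapl u (x + y) := by
  let φ : ContDiffBump (0:E2) := ⟨(t+T)/2, (t+3*T)/4, by linarith, by linarith⟩
  set W : E2 → ℝ := fun y => φ y * u (x + y) with hW
  have hfd : ∀ (f : E2 → ℝ) j y, pd j (fun y => f (x + y)) y = pd j f (x + y) := by
    intro f j y
    unfold pd
    rw [fderiv_comp_add_left]
  have heq : ∀ y, ‖y‖ < (t+T)/2 → W y = u (x + y) := by
    intro y hy
    have : φ y = 1 := φ.one_of_mem_closedBall (by rw [mem_closedBall_zero_iff]; exact hy.le)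
    simp [hW, this]
  have hev : ∀ y, ‖y‖ < (t+T)/2 → W =ᶠ[nhds y] fun y => u (x + y) := by
    intro y hy
    filter_upwards [isOpen_ball.mem_nhds (mem_ball_zero_iff.2 hy)] with z hz
    exact heq z (mem_ball_zero_iff.1 hz)
  have hpd : ∀ j y, ‖y‖ < (t+T)/2 → pd j W y = pd j u (x + y) := by
    intro j y hy
    rw [← hfd u j y]
    unfold pd
    rw [(hev y hy).fderiv_eq]
  have hpd2 : ∀ j y, ‖y‖ < (t+T)/2 → pd j (pd j W) y = pd j (pd j u) (x + y) := by
    intro j y hy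
    rw [← hfd (pd j u) j y]
    have : pd j W =ᶠ[nhds y] fun y => pd j u (x + y) := by
      filter_upwards [isOpen_ball.mem_nhds (mem_ball_zero_iff.2 hy)] with z hz
      exact hpd j z (mem_ball_zero_iff.1 hz)
    conv_lhs => unfold pd
    conv_rhs => unfold pd
    exact congrArg (fun L : E2 →L[ℝ] ℝ => L (EuclideanSpace.single j 1)) (this.fderiv_eq (𝕜 := ℝ))
  refine ⟨W, ?_, fun y hy => heq y (by linarith), fun j y hy => hpd j y (by linarith), fun y hy => ?_⟩
  · rw [contDiff_iff_contDiffAt]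
    intro y
    by_cases hy : ‖y‖ < T
    · have hxy : x + y ∈ ball x T := by simpa [mem_ball, dist_eq_norm] using hy
      have h1 : ContDiffAt ℝ 2 u (x + y) := hu.contDiffAt (isOpen_ball.mem_nhds hxy)
      have h2 : ContDiffAt ℝ 2 (fun y => u (x + y)) y := h1.comp y (contDiffAt_const.add contDiffAt_id)
      exact φ.contDiffAt.mul h2
    · have hnt : y ∉ tsupport φ := by
        intro h
        rw [φ.tsupport_eq, mem_closedBall_zero_iff] at h
        have h' : ‖y‖ ≤ (t+3*T)/4 := h
        linarith
      have : W =ᶠ[nhds y] fun _ => 0 := by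
        filter_upwards [notMem_tsupport_iff_eventuallyEq.1 hnt] with z hz
        simp [hW, hz]
      exact contDiffAt_const.congr_of_eventuallyEq this
  · simp only [lapl]
    rw [hpd2 0 y (by linarith), hpd2 1 y (by linarith)]

lemma shift_int (f : E2 → ℝ) (x : E2) (ρ : ℝ) : ∫ y in ball x ρ, f y = ∫ y in ball (0:E2) ρ, f (x + y) := by
  rw [← integral_indicator measurableSet_ball, ← integral_indicator measurableSet_ball, ← integral_add_left_eq_self _ x]
  congr 1; ext y
  by_cases hy : ‖y‖ < ρ
  · rw [Set.indicator_of_mem, Set.indicator_of_mem] <;> simpa [mem_ball, dist_eq_norm] using hy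
  · rw [Set.indicator_of_notMem, Set.indicator_of_notMem] <;> simpa [mem_ball, dist_eq_norm] using hy

lemma u_nonneg (u : E2 → ℝ) (hu : ContDiffOn ℝ 2 u (closedBall (0:E2) 1)) (hl : ∀ x ∈ ball (0:E2) 1, 0 ≤ -lapl u x)
    (hbc : ∀ x ∈ sphere (0:E2) 1, u x = 0) : ∀ x ∈ closedBall (0:E2) 1, 0 ≤ u x := by
  intro x hx
  have := max_principle (fun x => -u x) 0 1 0 hu.continuousOn.neg ?_ (fun x hx => by simp [hbc x hx]) x hx
  · simpa using this
  · intro x hx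
    have hx1 := mem_ball_zero_iff.1 hx
    have hsub : ball x (1 - ‖x‖) ⊆ ball (0:E2) 1 := by
      intro y hy
      rw [mem_ball_zero_iff]
      rw [mem_ball, dist_eq_norm] at hy
      have : ‖y‖ ≤ ‖y - x‖ + ‖x‖ := by simpa using norm_add_le (y - x) x
      linarith
    have ht : 0 < (1 - ‖x‖)/2 := by linarith
    obtain ⟨W, hW, w1, w2, w3⟩ := ext_local u x ((1 - ‖x‖)/2) (1 - ‖x‖) ht (by linarith) (hu.mono (hsub.trans ball_subset_closedBall))
    refine ⟨(1 - ‖x‖)/2, ht, fun y hy => hsub (closedBall_subset_ball (by linarith) hy), ?_⟩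
    have cm := circle_mean W hW 0 _ ht
    have e : ∀ θ, W (0 + ((1 - ‖x‖)/2) • ee θ) = u (x + ((1 - ‖x‖)/2) • ee θ) := by
      intro θ
      rw [zero_add]
      exact w1 _ (by rw [norm_smul, norm_ee, Real.norm_of_nonneg ht.le]; simp)
    simp_rw [e] at cm
    rw [w1 0 (by simpa using ht.le), add_zero] at cm
    have neg : ∫ y in ball (0:E2) ((1 - ‖x‖)/2), Real.log ((1 - ‖x‖)/2 / ‖0 - y‖) * lapl W y ≤ 0 := by
      refine setIntegral_nonpos measurableSet_ball fun y hy => ?_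
      have hy' := mem_ball_zero_iff.1 hy
      have hlap := hl (x + y) (hsub (by rw [mem_ball, dist_eq_norm]; simp; linarith))
      rw [w3 y hy'.le]
      rw [zero_sub, norm_neg]
      have : 0 ≤ Real.log ((1 - ‖x‖)/2 / ‖y‖) := by
        rcases eq_or_lt_of_le (norm_nonneg y) with h | h
        · rw [← h]; simp
        · exact Real.log_nonneg (by rw [le_div_iff₀ h]; linarith)
      nlinarith
    rw [intervalIntegral.integral_neg]
    linarith

lemma setup (u V : E2 → ℝ) (x : E2) (δ r b C₀ C1 : ℝ)
    (hu : ContDiffOn ℝ 2 u (closedBall (0:E2) 1))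
    (hVb : ∀ x ∈ ball (0:E2) 1, 0 ≤ V x ∧ V x ≤ b)
    (hpde : ∀ x ∈ ball (0:E2) 1, -(lapl u x) = V x * Real.exp (u x))
    (hbc : ∀ x ∈ sphere (0:E2) 1, u x = 0)
    (hint : (∫ y in ball (0:E2) 1, Real.exp (u y)) ≤ C₀)
    (hxmem : x ∈ ball (0:E2) 1)
    (hmax : ∀ y ∈ closedBall (0:E2) 1, u y ≤ u x)
    (hδ : δ = Metric.infDist x (sphere (0:E2) 1))
    (hr : r = Real.exp (-(u x) / 2))
    (hC1 : ∀ y : E2, ‖y‖ = 1/2 → u (x + δ • y) ≤ C1) :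
    0 < δ ∧ ball x δ ⊆ ball (0:E2) 1 ∧ ∃ U, Core U b C₀ C1 (δ/2) r ∧ (∀ y, ‖y‖ ≤ δ/2 → U y = u (x + y)) ∧
      (∀ j y, ‖y‖ ≤ δ/2 → pd j U y = pd j u (x + y)) ∧ ∀ y, ‖y‖ ≤ δ/2 → lapl U y = lapl u (x + y) := by
  have hx1 := mem_ball_zero_iff.1 hxmem
  have hne : (sphere (0:E2) 1).Nonempty := ⟨ee 0, by simp [norm_ee]⟩
  have hδ0 : 0 < δ := by
    rw [hδ]
    refine (isClosed_sphere.notMem_iff_infDist_pos hne).1 ?_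
    intro h
    rw [mem_sphere_zero_iff_norm] at h
    linarith
  have hδ1 : δ ≤ 1 - ‖x‖ := by
    by_cases hx0 : x = 0
    · have h1 : ee 0 ∈ sphere (0:E2) 1 := by simp [norm_ee]
      have := infDist_le_dist_of_mem (x := x) h1
      rw [← hδ, hx0, dist_eq_norm, zero_sub, norm_neg, norm_ee] at this
      simpa [hx0] using this
    · have hn : 0 < ‖x‖ := norm_pos_iff.2 hx0
      have h1 : ‖x‖⁻¹ • x ∈ sphere (0:E2) 1 := by
        rw [mem_sphere_zero_iff_norm, norm_smul, norm_inv, norm_norm, inv_mul_cancel₀ hn.ne']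
      have := infDist_le_dist_of_mem (x := x) h1
      rw [← hδ, dist_comm, dist_eq_norm] at this
      have e : ‖x‖⁻¹ • x - x = (‖x‖⁻¹ - 1) • x := by rw [sub_smul, one_smul]
      have h2 : 0 ≤ ‖x‖⁻¹ - 1 := by
        have := (one_le_inv₀ hn).2 hx1.le
        linarith
      rw [e, norm_smul, Real.norm_of_nonneg h2, sub_mul, inv_mul_cancel₀ hn.ne', one_mul] at this
      exact this
  have hsub : ball x δ ⊆ ball (0:E2) 1 := by
    intro y hy
    rw [mem_ball_zero_iff]
    rw [mem_ball, dist_eq_norm] at hy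
    have : ‖y‖ ≤ ‖y - x‖ + ‖x‖ := by simpa using norm_add_le (y - x) x
    linarith
  have hin : ∀ y : E2, ‖y‖ ≤ δ/2 → x + y ∈ ball (0:E2) 1 := fun y hy =>
    hsub (by rw [mem_ball, dist_eq_norm]; simp; linarith)
  have hl : ∀ x ∈ ball (0:E2) 1, 0 ≤ -lapl u x := fun y hy => by
    rw [hpde y hy]; exact mul_nonneg (hVb y hy).1 (Real.exp_pos _).le
  have hnn := u_nonneg u hu hl hbc
  obtain ⟨U, hU, w1, w2, w3⟩ := ext_local u x (δ/2) δ (by linarith) (by linarith) (hu.mono (hsub.trans ball_subset_closedBall))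
  have mb : ∀ y ∈ ball (0:E2) (δ/2), ‖y‖ ≤ δ/2 := fun y hy => (mem_ball_zero_iff.1 hy).le
  have hU0 : U 0 = u x := by rw [w1 0 (by simp; linarith), add_zero]
  refine ⟨hδ0, hsub, U, ?_, w1, w2, w3⟩
  refine ⟨hU, by linarith, by rw [hr]; exact Real.exp_pos _, ?_, ?_, ?_, ?_, ?_, ?_, ?_⟩
  · intro y hy
    rw [w3 y (mb y hy)]; exact hl _ (hin y (mb y hy))
  · intro y hy
    have h := hin y (mb y hy)
    rw [w3 y (mb y hy), hpde _ h, w1 y (mb y hy)]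
    exact mul_le_mul_of_nonneg_right (hVb _ h).2 (Real.exp_pos _).le
  · rw [hU0, hr, ← Real.exp_nat_mul, ← Real.exp_neg]
    congr 1; push_cast; ring
  · intro y hy
    rw [hU0, w1 y (mb y hy)]
    exact hmax _ (ball_subset_closedBall (hin y (mb y hy)))
  · intro y hy
    have hy' : ‖y‖ ≤ δ/2 := mem_closedBall_zero_iff.1 hy
    rw [w1 y hy']
    exact hnn _ (ball_subset_closedBall (hin y hy'))
  · intro y hy
    have hy' : ‖y‖ = δ/2 := mem_sphere_zero_iff_norm.1 hy
    rw [w1 y hy'.le]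
    have := hC1 (δ⁻¹ • y) (by rw [norm_smul, hy', norm_inv, Real.norm_of_nonneg hδ0.le]; field_simp)
    rwa [smul_smul, mul_inv_cancel₀ hδ0.ne', one_smul] at this
  · have e : ∫ y in ball (0:E2) (δ/2), Real.exp (U y) = ∫ y in ball x (δ/2), Real.exp (u y) := by
      rw [shift_int (fun y => Real.exp (u y)) x]
      exact setIntegral_congr_fun measurableSet_ball fun y hy => by simp only [w1 y (mb y hy)]
    rw [e]
    refine le_trans (setIntegral_mono_set ?_ (Eventually.of_forall fun x => (Real.exp_pos _).le) (LE.le.eventuallyLE ?_)) hint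
    · exact ((hu.continuousOn.rexp).integrableOn_compact (isCompact_closedBall _ _)).mono_set ball_subset_closedBall
    · exact (ball_subset_ball (by linarith)).trans hsub

theorem stmt16
    (b A s C₀ : ℝ) (hs1 : 1/2 < s) (hs2 : s ≤ 1)
    (V u : ℕ → E2 → ℝ) (x_ : ℕ → E2) (δ r : ℕ → ℝ) (v : ℕ → E2 → ℝ)
    (hu : ∀ i, ContDiffOn ℝ 2 (u i) (closedBall (0:E2) 1))
    (hVb : ∀ i, ∀ x ∈ ball (0:E2) 1, 0 ≤ V i x ∧ V i x ≤ b)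
    (hVhol : ∀ i, ∀ x ∈ ball (0:E2) 1, ∀ y ∈ ball (0:E2) 1, |V i x - V i y| ≤ A * ‖x - y‖ ^ s)
    (hpde : ∀ i, ∀ x ∈ ball (0:E2) 1, -(lapl (u i) x) = V i x * Real.exp (u i x))
    (hbc : ∀ i, ∀ x ∈ sphere (0:E2) 1, u i x = 0)
    (hint : ∀ i, (∫ y in ball (0:E2) 1, Real.exp (u i y)) ≤ C₀)
    (hxmem : ∀ i, x_ i ∈ ball (0:E2) 1)
    (hmax : ∀ i, ∀ y ∈ closedBall (0:E2) 1, u i y ≤ u i (x_ i))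
    (hblow : Tendsto (fun i => u i (x_ i)) atTop atTop)
    (hδ : ∀ i, δ i = Metric.infDist (x_ i) (sphere (0:E2) 1))
    (hδ0 : Tendsto δ atTop (nhds 0))
    (hr : ∀ i, r i = Real.exp (-(u i (x_ i)) / 2))
    (hrδ : Tendsto (fun i => r i / δ i) atTop (nhds 0))
    (hmass : Tendsto (fun i => ∫ y in ball (x_ i) (δ i / 2), V i y * Real.exp (u i y)) atTop
      (nhds (8 * Real.pi)))
    (hbound : ∀ ε : ℝ, 0 < ε → ε < 1 → ∃ Cε : ℝ, ∀ i, ∀ y : E2, ‖y‖ = ε →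
      u i (x_ i + δ i • y) ≤ Cε)
    (hv : ∀ i θ, v i θ = u i (x_ i + r i • θ) - u i (x_ i)) :
    ∀ ε' : ℝ, ε' ∈ Set.Ioo (0:ℝ) (1/4) →
      Tendsto (fun i => δ i * ∫ y in ball (x_ i) (δ i * ε'),
        pd 0 (u i) y * (V i y * Real.exp (u i y))) atTop (nhds 0) := by
  intro ε' hε'
  have hb : 0 ≤ b := by
    have := hVb 0 0 (by simp)
    linarith
  have hs0 : 1/2 < min s (3/4) := lt_min hs1 (by norm_num)
  obtain ⟨C1, hC1⟩ := hbound (1/2) (by norm_num) (by norm_num)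
  obtain ⟨C2, hC2⟩ := hbound ε' hε'.1 (by linarith [hε'.2])
  obtain ⟨R2, hR2, η, hη, D, hD, γ, hγ, hend⟩ := core_end b C₀ C1 |A| (min s (3/4)) hb (abs_nonneg A) hs0 (min_le_right _ _)
  have ev1 : ∀ᶠ i in atTop, r i / δ i < 1 / (4 * R2) := hrδ.eventually (gt_mem_nhds (by positivity))
  have ev2 : ∀ᶠ i in atTop, |(∫ y in ball (x_ i) (δ i / 2), V i y * Real.exp (u i y)) - 8 * Real.pi| < η := by
    have := hmass.eventually (Metric.ball_mem_nhds _ hη)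
    filter_upwards [this] with i hi
    simpa [Metric.mem_ball, Real.dist_eq] using hi
  have ev3 : ∀ᶠ i in atTop, δ i < 1 := hδ0.eventually (gt_mem_nhds one_pos)
  have hlim : Tendsto (fun i => 2 * (b * Real.exp C2 * (δ i / 2)^2 + D * (δ i / 2)^γ)) atTop (nhds 0) := by
    have h2 : Tendsto (fun i => δ i / 2) atTop (nhds 0) := by simpa using hδ0.div_const 2
    have h3 := h2.pow 2
    have h4 := h2.rpow_const (p := γ) (Or.inr hγ.le)
    have := ((h3.const_mul (b * Real.exp C2)).add (h4.const_mul D)).const_mul 2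
    simpa [Real.zero_rpow hγ.ne'] using this
  refine squeeze_zero_norm' ?_ hlim
  filter_upwards [ev1, ev2, ev3] with i h1 h2 h3
  obtain ⟨hδp, hsub, U, H, w1, w2, w3⟩ := setup (u i) (V i) (x_ i) (δ i) (r i) b C₀ C1 (hu i) (hVb i) (hpde i) (hbc i) (hint i)
    (hxmem i) (hmax i) (hδ i) (hr i) (hC1 i)
  have hin : ∀ y : E2, ‖y‖ ≤ δ i/2 → x_ i + y ∈ ball (0:E2) 1 := fun y hy =>
    hsub (by rw [mem_ball, dist_eq_norm]; simp; linarith)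
  have mb : ∀ y ∈ ball (0:E2) (δ i/2), ‖y‖ ≤ δ i/2 := fun y hy => (mem_ball_zero_iff.1 hy).le
  have hρ : δ i * ε' ≤ δ i / 2 / 2 := by nlinarith [hε'.2]
  have hmm : mm U (δ i / 2) = ∫ y in ball (x_ i) (δ i / 2), V i y * Real.exp (u i y) := by
    rw [mm, shift_int (fun y => V i y * Real.exp (u i y)) (x_ i)]
    refine setIntegral_congr_fun measurableSet_ball fun y hy => ?_
    simp only [w3 y (mb y hy)]
    exact hpde i _ (hin y (mb y hy))
  have hJ : ∫ y in ball (x_ i) (δ i * ε'), pd 0 (u i) y * (V i y * Real.exp (u i y)) =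
      ∫ y in ball (0:E2) (δ i * ε'), pd 0 U y * (-lapl U y) := by
    rw [shift_int (fun y => pd 0 (u i) y * (V i y * Real.exp (u i y))) (x_ i)]
    refine setIntegral_congr_fun measurableSet_ball fun y hy => ?_
    have hy' : ‖y‖ ≤ δ i / 2 := by
      have := mem_ball_zero_iff.1 hy
      linarith
    simp only [w3 y hy', w2 0 y hy', hpde i _ (hin y hy')]
  have hV0 := hVb i (x_ i) (hxmem i)
  have E := hend U (δ i / 2) (r i) (δ i * ε') (Real.exp C2) (V i (x_ i)) H ?_ (by rw [hmm]; exact h2.le) hV0.1 hV0.2 ?_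
    (mul_pos hδp hε'.1) hρ ?_ (Real.exp_pos _).le
  · rw [hJ, Real.norm_eq_abs, abs_mul, abs_of_pos hδp]
    linarith
  · rw [div_lt_div_iff₀ hδp (by positivity)] at h1
    linarith
  · intro y hy
    have hy' := mb y hy
    have hy1 : ‖y‖ ≤ 1 := by linarith
    have hI := hin y hy'
    rw [w3 y hy', w1 y hy', hpde i _ hI, ← sub_mul, abs_mul, Real.abs_exp]
    refine mul_le_mul_of_nonneg_right ?_ (Real.exp_pos _).le
    have h := hVhol i _ hI _ (hxmem i)
    rw [add_sub_cancel_left] at h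
    refine h.trans ?_
    have hp : ‖y‖ ^ s ≤ ‖y‖ ^ (min s (3/4)) := by
      rcases eq_or_lt_of_le (norm_nonneg y) with h0 | h0
      · rw [← h0, Real.zero_rpow (by linarith), Real.zero_rpow (by linarith)]
      · exact Real.rpow_le_rpow_of_exponent_ge h0 hy1 (min_le_left _ _)
    exact mul_le_mul (le_abs_self A) hp (Real.rpow_nonneg (norm_nonneg _) _) (abs_nonneg _)
  · intro y hy
    have hy' : ‖y‖ = δ i * ε' := mem_sphere_zero_iff_norm.1 hy
    rw [w1 y (by linarith)]
    refine Real.exp_le_exp.2 ?_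
    have := hC2 i ((δ i)⁻¹ • y) (by rw [norm_smul, hy', norm_inv, Real.norm_of_nonneg hδp.le]; field_simp)
    rwa [smul_smul, mul_inv_cancel₀ hδp.ne', one_smul] at this
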